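/- arXiv:1508.02014 — 3 statements merged into one kernel-verified Lean document; each statement's English description precedes it below -/
import Mathlib

section
/- Let n ≥ 1, c ∈ ℝ^n, and k ∈ L^1_c(ℝ^n_+). Then the equation ∫_{ℝ^n_+} k(p_1x_1,…,p_nx_n) f(x) dx = 0 for all p ∈ ℝ^n_+ has only the trivial solution f = 0 (a.e.) in L^∞_{I−c}(ℝ^n_+) if and only if (Mk)(c + iξ) ≠ 0 for every ξ ∈ ℝ^n. -/
open MeasureTheory Complex Set

noncomputable section

/-- The positive orthant `ℝ^n_+`. -/
def posOrth (n : ℕ) : Set (Fin n → ℝ) := {x | ∀ i, 0 < x i}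

/-- The `n`-dimensional Mellin transform `(Mg)(z) = ∫_{ℝ^n_+} x^{z-I} g(x) dx`. -/
def mellinT (n : ℕ) (g : (Fin n → ℝ) → ℝ) (z : Fin n → ℂ) : ℂ :=
  ∫ x in posOrth n, (∏ i, (x i : ℂ) ^ (z i - 1)) * g x

/-- Membership in `L¹_c(ℝ^n_+)`: measurable with `∫ |f| x^{c-I} < ∞`. -/
def MemL1w (n : ℕ) (c : Fin n → ℝ) (f : (Fin n → ℝ) → ℝ) : Prop :=
  IntegrableOn (fun x => f x * ∏ i, x i ^ (c i - 1)) (posOrth n)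

/-- Membership in `L^∞_c(ℝ^n_+)`: measurable with `ess sup |f(x) x^c| < ∞`. -/
def MemLinfw (n : ℕ) (c : Fin n → ℝ) (f : (Fin n → ℝ) → ℝ) : Prop :=
  AEStronglyMeasurable f (volume.restrict (posOrth n)) ∧
  ∃ K : ℝ, ∀ᵐ x ∂(volume.restrict (posOrth n)), |f x * ∏ i, x i ^ c i| ≤ K

/-!
In the coordinates `t = log x` the equation reads `∫ κ(s + t) φ(t) dt = 0` with
`κ(t) = exp(c·t) k(exp t)` integrable and `φ` bounded, and the values of the Mellin transform on
`c + iℝⁿ` are those of `𝓕κ`. A zero `ξ` of `𝓕κ` gives the bounded solution `t ↦ cos(2π⟪t, ξ⟫)`.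

The converse is the Wiener Tauberian theorem for `κ ⋆ φ = 0`. If `a = 𝓕κ(ξ₀) ≠ 0`, a sufficiently
concentrated bump near `ξ₀` yields `w` with `𝓕w = 1` near `ξ₀` and `‖κ ⋆ w - a w‖₁ < |a|`. When
`𝓕h` is supported where `𝓕w = 1`, the bounded function `u = h ⋆ φ` satisfies `w ⋆ u = u` and
`κ ⋆ u = 0`, so `(κ ⋆ w - a w) ⋆ u = -a u`, which forces `u = 0`. Cut-offs glue these local
statements: `h ⋆ φ = 0` whenever `𝓕h` has compact support. Approximating the identity by such `h`
gives `φ = 0`.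
-/

open Filter Topology
open scoped ContDiff Convolution ENNReal FourierTransform SchwartzMap

section Convolution

variable {G 𝕜 : Type*} [RCLike 𝕜] [MeasurableSpace G] [AddCommGroup G] [MeasurableAdd₂ G]
  [MeasurableNeg G] {μ : Measure G} [μ.IsAddLeftInvariant] [μ.IsNegInvariant]
  {f g κ w h r u φ : G → 𝕜}

local notation "𝐦" => ContinuousLinearMap.mul 𝕜 𝕜

lemma convolution_mul_comm (f g : G → 𝕜) : f ⋆[𝐦, μ] g = g ⋆[𝐦, μ] f := by
  rw [← convolution_flip, ContinuousLinearMap.flip_mul]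

lemma convolutionExists_of_integrable_of_memLp_top (hf : Integrable f μ) (hφ : MemLp φ ∞ μ) :
    ConvolutionExists f φ 𝐦 μ := fun x =>
  hf.mul_of_top_left (hφ.comp_measurePreserving (Measure.measurePreserving_sub_left μ x))

lemma norm_convolution_le_integral_norm_mul_lpNorm_top (hf : Integrable f μ)
    (hφ : MemLp φ ∞ μ) (x : G) :
    ‖(f ⋆[𝐦, μ] φ) x‖ ≤ (∫ y, ‖f y‖ ∂μ) * lpNorm φ ∞ μ := by
  rw [← integral_mul_const]
  refine norm_integral_le_of_norm_le (hf.norm.mul_const _) ?_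
  filter_upwards [(Measure.measurePreserving_sub_left μ x).quasiMeasurePreserving.ae
    (ae_le_lpNorm_exponent_top hφ)] with y hy
  rw [ContinuousLinearMap.mul_apply', norm_mul]
  gcongr

lemma sub_convolution_of_memLp_top (hf : Integrable f μ) (hg : Integrable g μ)
    (hφ : MemLp φ ∞ μ) : (f - g) ⋆[𝐦, μ] φ = f ⋆[𝐦, μ] φ - g ⋆[𝐦, μ] φ := by
  ext x
  simpa [convolution_def, sub_mul] using
    integral_sub (convolutionExists_of_integrable_of_memLp_top hf hφ x)
      (convolutionExists_of_integrable_of_memLp_top hg hφ x)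

lemma eq_zero_of_convolution_eq_smul {c : 𝕜} (hr : Integrable r μ) (hu : MemLp u ∞ μ)
    (hrc : ∫ x, ‖r x‖ ∂μ < ‖c‖) (hru : r ⋆[𝐦, μ] u = c • u) : u = 0 := by
  set C := lpNorm u ∞ μ
  have hc : 0 < ‖c‖ := (integral_nonneg fun _ => norm_nonneg _).trans_lt hrc
  have bound (x : G) : ‖u x‖ ≤ (∫ y, ‖r y‖ ∂μ) * C / ‖c‖ := by
    rw [le_div_iff₀' hc, ← norm_smul, ← Pi.smul_apply, ← hru]
    exact norm_convolution_le_integral_norm_mul_lpNorm_top hr hu x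
  have hC : C ≤ (∫ y, ‖r y‖ ∂μ) * C / ‖c‖ :=
    (toReal_eLpNorm hu.1).symm.trans_le <|
      ENNReal.toReal_le_of_le_ofReal ((norm_nonneg _).trans (bound 0))
        (eLpNormEssSup_le_of_ae_bound (Eventually.of_forall bound))
  have hC0 : C = 0 := by
    rw [le_div_iff₀ hc] at hC
    nlinarith [lpNorm_nonneg (f := u) (p := ∞) (μ := μ)]
  ext x
  simpa [hC0] using bound x

lemma convolution_eq_zero_of_tendsto {ι : Type*} {l : Filter ι} [l.NeBot] {F : ι → G → 𝕜}
    (hF : ∀ᶠ i in l, Integrable (F i) μ) (hf : Integrable f μ) (hφ : MemLp φ ∞ μ)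
    (hFφ : ∀ᶠ i in l, F i ⋆[𝐦, μ] φ = 0)
    (hlim : Tendsto (fun i => ∫ x, ‖F i x - f x‖ ∂μ) l (𝓝 0)) : f ⋆[𝐦, μ] φ = 0 := by
  ext x
  rw [Pi.zero_apply, ← norm_le_zero_iff]
  refine ge_of_tendsto (by simpa using hlim.mul_const (lpNorm φ ∞ μ)) ?_
  filter_upwards [hF, hFφ] with i hi hiφ
  have h := norm_convolution_le_integral_norm_mul_lpNorm_top (hi.sub hf) hφ x
  rwa [sub_convolution_of_memLp_top hi hf hφ, hiφ, zero_sub, Pi.neg_apply, norm_neg] at h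

variable [SFinite μ]

lemma memLp_top_convolution (hf : Integrable f μ) (hφ : MemLp φ ∞ μ) :
    MemLp (f ⋆[𝐦, μ] φ) ∞ μ :=
  memLp_top_of_bound
    (hf.1.convolution_integrand 𝐦 hφ.1).integral_prod_right' _
    (Eventually.of_forall (norm_convolution_le_integral_norm_mul_lpNorm_top hf hφ))

lemma convolution_convolution_of_memLp_top (hf : Integrable f μ) (hg : Integrable g μ)
    (hφ : MemLp φ ∞ μ) : (f ⋆[𝐦, μ] g) ⋆[𝐦, μ] φ = f ⋆[𝐦, μ] (g ⋆[𝐦, μ] φ) := by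
  ext x
  refine convolution_assoc _ _ _ _ (by simp [mul_assoc]) hf.1 hg.1 hφ.1
    (hf.ae_convolution_exists _ hg) (Eventually.of_forall ?_) ?_
  · exact convolutionExists_of_integrable_of_memLp_top hg.norm hφ.norm
  · exact convolutionExists_of_integrable_of_memLp_top hf.norm
      (memLp_top_convolution hg.norm hφ.norm) x

lemma convolution_eq_zero_of_approx_eigenvector {c : 𝕜} (hκ : Integrable κ μ)
    (hw : Integrable w μ) (hh : Integrable h μ) (hφ : MemLp φ ∞ μ) (hκφ : κ ⋆[𝐦, μ] φ = 0)
    (hwh : w ⋆[𝐦, μ] h = h) (hκw : ∫ x, ‖(κ ⋆[𝐦, μ] w - c • w) x‖ ∂μ < ‖c‖) : h ⋆[𝐦, μ] φ = 0 := by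
  set u := h ⋆[𝐦, μ] φ with hu
  have hu_mem : MemLp u ∞ μ := memLp_top_convolution hh hφ
  have hκw_int : Integrable (κ ⋆[𝐦, μ] w) μ := hκ.integrable_convolution _ hw
  have hwu : w ⋆[𝐦, μ] u = u := by rw [hu, ← convolution_convolution_of_memLp_top hw hh hφ, hwh]
  have hκu : κ ⋆[𝐦, μ] u = 0 := by
    rw [hu, ← convolution_convolution_of_memLp_top hκ hh hφ, convolution_mul_comm κ h,
      convolution_convolution_of_memLp_top hh hκ hφ, hκφ, convolution_zero]
  refine eq_zero_of_convolution_eq_smul (c := -c) (hκw_int.sub (hw.smul c)) hu_mem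
    (by rwa [norm_neg]) ?_
  rw [sub_convolution_of_memLp_top hκw_int (hw.smul c) hu_mem, smul_convolution,
    convolution_convolution_of_memLp_top hκ hw hu_mem, hwu, hκu, zero_sub, neg_smul]

end Convolution

/-- The `L¹` modulus of continuity of `g`: the `L¹` distance from `g` to its translate by `z`. -/
def translationModulus {G F : Type*} [MeasurableSpace G] [Sub G] [NormedAddCommGroup F]
    (μ : Measure G) (g : G → F) (z : G) : ℝ :=
  ∫ x, ‖g (x - z) - g x‖ ∂μ

section TranslationModulus

variable {G F 𝕜 : Type*} [RCLike 𝕜] [NormedAddCommGroup F] [AddGroup G] [MeasurableSpace G]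
  {μ : Measure G} [μ.IsAddRightInvariant] {g : G → F}

local notation "𝐦" => ContinuousLinearMap.mul 𝕜 𝕜

lemma translationModulus_le [MeasurableAdd G] (hg : Integrable g μ) (z : G) :
    translationModulus μ g z ≤ 2 * ∫ x, ‖g x‖ ∂μ :=
  calc translationModulus μ g z ≤ ∫ x, (‖g (x - z)‖ + ‖g x‖) ∂μ :=
        integral_mono ((hg.comp_sub_right z).sub hg).norm
          ((hg.comp_sub_right z).norm.add hg.norm) fun _ => norm_sub_le _ _
    _ = 2 * ∫ x, ‖g x‖ ∂μ := by
        rw [integral_add (hg.comp_sub_right z).norm hg.norm,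
          integral_sub_right_eq_self (fun x => ‖g x‖) z, two_mul]

lemma continuous_translationModulus [TopologicalSpace G] [IsTopologicalAddGroup G] [R1Space G]
    [BorelSpace G] [μ.InnerRegularCompactLTTop] [IsLocallyFiniteMeasure μ] (hg : Integrable g μ) :
    Continuous (translationModulus μ g) := by
  let T (z : G) : C(G, G) := ⟨fun x => x - z, by fun_prop⟩
  have hT : Continuous T := ContinuousMap.continuous_of_continuous_uncurry _
    (show Continuous fun p : G × G => p.2 - p.1 by fun_prop)
  have hmp (z : G) : MeasurePreserving (T z) μ μ := measurePreserving_sub_right μ z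
  have hmem : MemLp g 1 μ := memLp_one_iff_integrable.2 hg
  have h_dist : Continuous fun z => ‖Lp.compMeasurePreserving (T z) (hmp z) (hmem.toLp g)
      - hmem.toLp g‖ :=
    ((continuous_const.compMeasurePreservingLp hT hmp ENNReal.one_ne_top).sub
      continuous_const).norm
  convert h_dist using 2 with z
  rw [Lp.toLp_compMeasurePreserving, ← MemLp.toLp_sub, L1.norm_eq_integral_norm]
  refine integral_congr_ae ?_
  filter_upwards [((hmem.comp_measurePreserving (hmp z)).sub hmem).coeFn_toLp] with x hx
  rw [hx]
  rfl

-- The Minkowski integral inequality for `x ↦ ∫ f(y) (g(x - y) - g(x)) dy`.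
lemma integral_norm_convolution_sub_smul_le [MeasurableAdd₂ G] [MeasurableNeg G] [SFinite μ]
    {f g : G → 𝕜} (hf : Integrable f μ) (hg : Integrable g μ) :
    ∫ x, ‖(f ⋆[𝐦, μ] g - (∫ y, f y ∂μ) • g) x‖ ∂μ ≤
      ∫ y, ‖f y‖ * translationModulus μ g y ∂μ := by
  have h_prod : Integrable (fun p : G × G => f p.2 * (g (p.1 - p.2) - g p.1)) (μ.prod μ) := by
    refine ((hf.convolution_integrand 𝐦 hg).sub
      (hg.mul_prod hf)).congr (ae_of_all _ fun p => ?_)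
    simp [mul_sub, mul_comm]
  have h_diff : ∀ᵐ x ∂μ, (f ⋆[𝐦, μ] g - (∫ y, f y ∂μ) • g) x =
      ∫ y, f y * (g (x - y) - g x) ∂μ := by
    filter_upwards [hf.ae_convolution_exists 𝐦 hg] with x hx
    have h_sub := integral_sub hx (hf.mul_const (g x))
    rw [integral_mul_const] at h_sub
    simpa [mul_sub, convolution_def] using h_sub.symm
  calc ∫ x, ‖(f ⋆[𝐦, μ] g - (∫ y, f y ∂μ) • g) x‖ ∂μ
      ≤ ∫ x, ∫ y, ‖f y * (g (x - y) - g x)‖ ∂μ ∂μ := by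
        refine integral_mono_of_nonneg (ae_of_all _ fun _ => norm_nonneg _)
          h_prod.norm.integral_prod_left ?_
        filter_upwards [h_diff] with x hx
        exact hx ▸ norm_integral_le_integral_norm _
    _ = ∫ y, ∫ x, ‖f y * (g (x - y) - g x)‖ ∂μ ∂μ := integral_integral_swap h_prod.norm
    _ = ∫ y, ‖f y‖ * translationModulus μ g y ∂μ := by
        simp only [norm_mul, integral_const_mul, translationModulus]

end TranslationModulus

/-- The dilation `x ↦ |r|ᵈ f(r x)` on a `d`-dimensional space, normalised to preserve integrals. -/
def dilate {E F : Type*} [AddCommGroup E] [Module ℝ E] [SMul ℝ F] (r : ℝ) (f : E → F) (x : E) : F :=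
  |r| ^ Module.finrank ℝ E • f (r • x)

section Dilation

variable {E F 𝕜 : Type*} [NormedAddCommGroup E] [NormedSpace ℝ E] [NormedAddCommGroup F]
  [NormedSpace ℝ F] [RCLike 𝕜] {r : ℝ}

lemma norm_dilate (f : E → F) (x : E) : ‖dilate r f x‖ = dilate r (fun y => ‖f y‖) x := by
  simp [dilate, norm_smul]

lemma dilate_inv_dilate (hr : r ≠ 0) (f : E → F) : dilate r⁻¹ (dilate r f) = f := by
  ext x
  rw [dilate, dilate, smul_smul, ← mul_pow, ← abs_mul, inv_mul_cancel₀ hr, smul_inv_smul₀ hr,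
    abs_one, one_pow, one_smul]

lemma exists_schwartzMap_coe_eq_dilate (hr : r ≠ 0) (f : 𝓢(E, F)) :
    ∃ g : 𝓢(E, F), ⇑g = dilate r f :=
  ⟨|r| ^ Module.finrank ℝ E • SchwartzMap.compCLMOfContinuousLinearEquiv ℝ
    (ContinuousLinearEquiv.smulLeft (Units.mk0 r hr)) f, rfl⟩

variable [FiniteDimensional ℝ E] [MeasurableSpace E] [BorelSpace E] {μ : Measure E}
  [μ.IsAddHaarMeasure]

local notation "𝐦" => ContinuousLinearMap.mul 𝕜 𝕜

lemma integral_dilate (hr : r ≠ 0) (f : E → F) : ∫ x, dilate r f x ∂μ = ∫ x, f x ∂μ := by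
  simp only [dilate]
  rw [integral_smul, Measure.integral_comp_smul, smul_smul, abs_inv, abs_pow,
    mul_inv_cancel₀ (by positivity), one_smul]

lemma integrable_dilate {f : E → F} (hr : r ≠ 0) (hf : Integrable f μ) :
    Integrable (dilate r f) μ :=
  (hf.comp_smul hr).smul (|r| ^ Module.finrank ℝ E)

lemma dilate_convolution (hr : r ≠ 0) (f g : E → 𝕜) :
    dilate r (f ⋆[𝐦, μ] g) = dilate r f ⋆[𝐦, μ] dilate r g := by
  ext x
  calc dilate r (f ⋆[𝐦, μ] g) x
      = |r| ^ Module.finrank ℝ E • ∫ y, dilate r (fun z => f z * g (r • x - z)) y ∂μ := by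
        rw [integral_dilate hr]
        rfl
    _ = (dilate r f ⋆[𝐦, μ] dilate r g) x := by
        rw [← integral_smul, convolution_def]
        simp only [dilate, ContinuousLinearMap.mul_apply', smul_sub, smul_mul_assoc,
          mul_smul_comm]

lemma tendsto_integral_norm_mul_translationModulus {V W : Type*} [NormedAddCommGroup V]
    [NormedAddCommGroup W] {κ : E → V} {g : E → W} (hκ : Integrable κ μ) (hg : Integrable g μ) :
    Tendsto (fun r : ℝ => ∫ y, ‖κ y‖ * translationModulus μ g (r⁻¹ • y) ∂μ) atTop (𝓝 0) := by
  have h_cont := continuous_translationModulus hg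
  rw [← integral_zero E ℝ (μ := μ)]
  refine tendsto_integral_filter_of_dominated_convergence
    (fun y => ‖κ y‖ * (2 * ∫ x, ‖g x‖ ∂μ)) (Eventually.of_forall fun r => ?_)
    (Eventually.of_forall fun r => ae_of_all _ fun y => ?_) (hκ.norm.mul_const _)
    (ae_of_all _ fun y => ?_)
  · exact hκ.1.norm.mul (h_cont.comp (continuous_const_smul r⁻¹)).aestronglyMeasurable
  · have h_nonneg : 0 ≤ translationModulus μ g (r⁻¹ • y) :=
      integral_nonneg fun _ => norm_nonneg _
    rw [norm_mul, norm_norm, Real.norm_of_nonneg h_nonneg]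
    gcongr
    exact translationModulus_le hg _
  · have h_inv : Tendsto (fun r : ℝ => r⁻¹ • y) atTop (𝓝 0) := by
      simpa using (tendsto_inv_atTop_zero (𝕜 := ℝ)).smul_const y
    simpa [translationModulus] using
      ((h_cont.tendsto 0).comp h_inv).const_mul ‖κ y‖

lemma tendsto_dilate_convolution {κ g : E → 𝕜} (hκ : Integrable κ μ) (hg : Integrable g μ) :
    Tendsto (fun r => ∫ x, ‖(dilate r κ ⋆[𝐦, μ] g - (∫ y, κ y ∂μ) • g) x‖ ∂μ) atTop (𝓝 0) := by
  refine squeeze_zero' (Eventually.of_forall fun r => integral_nonneg fun _ => norm_nonneg _) ?_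
    (tendsto_integral_norm_mul_translationModulus hκ hg)
  filter_upwards [eventually_ne_atTop 0] with r hr
  calc ∫ x, ‖(dilate r κ ⋆[𝐦, μ] g - (∫ y, κ y ∂μ) • g) x‖ ∂μ
      ≤ ∫ y, ‖dilate r κ y‖ * translationModulus μ g y ∂μ := by
        simpa only [integral_dilate hr] using
          integral_norm_convolution_sub_smul_le (integrable_dilate hr hκ) hg
    _ = ∫ y, dilate r (fun z => ‖κ z‖ * translationModulus μ g (r⁻¹ • z)) y ∂μ := by
        simp only [norm_dilate]
        simp only [dilate, smul_eq_mul, inv_smul_smul₀ hr, mul_assoc]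
    _ = ∫ y, ‖κ y‖ * translationModulus μ g (r⁻¹ • y) ∂μ := integral_dilate hr _

lemma tendsto_convolution_dilate {κ g : E → 𝕜} (hκ : Integrable κ μ) (hg : Integrable g μ) :
    Tendsto (fun r : ℝ => ∫ x, ‖(κ ⋆[𝐦, μ] dilate r⁻¹ g - (∫ y, κ y ∂μ) • dilate r⁻¹ g) x‖ ∂μ)
      atTop (𝓝 0) := by
  refine (tendsto_dilate_convolution hκ hg).congr' ?_
  filter_upwards [eventually_ne_atTop 0] with r hr
  have h_eq : κ ⋆[𝐦, μ] dilate r⁻¹ g - (∫ y, κ y ∂μ) • dilate r⁻¹ g =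
      dilate r⁻¹ (dilate r κ ⋆[𝐦, μ] g - (∫ y, κ y ∂μ) • g) := by
    rw [← dilate_inv_dilate hr κ, ← dilate_convolution (inv_ne_zero hr), dilate_inv_dilate hr]
    ext x
    simp only [dilate, Pi.sub_apply, Pi.smul_apply, smul_sub]
    rw [smul_comm]
  rw [h_eq]
  simp only [norm_dilate]
  exact (integral_dilate (inv_ne_zero hr) _).symm

end Dilation

section Gluing

variable {E F A : Type*} [NormedAddCommGroup E] [NormedSpace ℝ E] [FiniteDimensional ℝ E]
  [NormedAddCommGroup F] [NormedSpace ℂ F] [AddCommGroup A] {T : 𝓢(E, F) →+ A}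

lemma exists_schwartzMap_eventuallyEq_one_tsupport_subset {ξ : E} {U : Set E} (hU : U ∈ 𝓝 ξ) :
    ∃ χ : 𝓢(E, ℂ), HasCompactSupport χ ∧ χ =ᶠ[𝓝 ξ] 1 ∧ tsupport χ ⊆ U := by
  obtain ⟨ε, hε, hεU⟩ := Metric.nhds_basis_closedBall.mem_iff.1 hU
  let b : ContDiffBump ξ := ⟨ε / 2, ε, half_pos hε, half_lt_self hε⟩
  have h_compact : HasCompactSupport fun x => (b x : ℂ) :=
    b.hasCompactSupport.comp_left (g := ((↑) : ℝ → ℂ)) rfl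
  refine ⟨h_compact.toSchwartzMap (ofRealCLM.contDiff.comp b.contDiff), h_compact, ?_, ?_⟩
  · filter_upwards [b.eventuallyEq_one] with x hx
    exact congrArg ((↑) : ℝ → ℂ) hx
  · exact ((tsupport_comp_subset (g := ((↑) : ℝ → ℂ)) rfl b).trans_eq b.tsupport_eq).trans hεU

-- Cut-offs for two sets combine into `χ₁ + χ₂ - χ₁ χ₂`, a cut-off for their union.
lemma exists_cutoff_of_locally_isVanishingOn (hT : ∀ ξ, ∃ U ∈ 𝓝 ξ, Distribution.IsVanishingOn T U)
    {s : Set E} (hs : IsCompact s) :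
    ∃ χ : E → ℂ, χ.HasTemperateGrowth ∧ EqOn χ 1 s ∧
      ∀ ψ, T (SchwartzMap.smulLeftCLM F χ ψ) = 0 := by
  refine hs.induction_on ?empty ?mono ?union ?nhds
  case empty => exact ⟨fun _ => 0, .const 0, eqOn_empty _ _, fun ψ => by simp⟩
  case mono =>
    rintro s t hst ⟨χ, hχ, hχt, hTχ⟩
    exact ⟨χ, hχ, hχt.mono hst, hTχ⟩
  case union =>
    rintro s t ⟨χ₁, hχ₁, hχs, hTχ₁⟩ ⟨χ₂, hχ₂, hχt, hTχ₂⟩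
    refine ⟨χ₁ + χ₂ - χ₁ * χ₂, (hχ₁.add hχ₂).sub (hχ₁.mul hχ₂), ?_, fun ψ => ?_⟩
    · rintro x (hx | hx)
      · simp [hχs hx]
      · simp [hχt hx]
    · rw [SchwartzMap.smulLeftCLM_sub (hχ₁.add hχ₂) (hχ₁.mul hχ₂),
        SchwartzMap.smulLeftCLM_add hχ₁ hχ₂]
      simp [← SchwartzMap.smulLeftCLM_smulLeftCLM_apply hχ₁ hχ₂, hTχ₁, hTχ₂]
  case nhds =>
    intro ξ _
    obtain ⟨U, hU, hTU⟩ := hT ξ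
    obtain ⟨χ, -, hχ_one, hχU⟩ := exists_schwartzMap_eventuallyEq_one_tsupport_subset hU
    refine ⟨{x | χ x = 1}, mem_nhdsWithin_of_mem_nhds hχ_one, χ, χ.hasTemperateGrowth,
      fun _ hx => hx, fun ψ => hTU _ ?_⟩
    exact ((SchwartzMap.tsupport_smulLeftCLM_subset χ ψ).trans inter_subset_right).trans hχU

lemma map_eq_zero_of_locally_isVanishingOn (hT : ∀ ξ, ∃ U ∈ 𝓝 ξ, Distribution.IsVanishingOn T U)
    {ψ : 𝓢(E, F)} (hψ : HasCompactSupport ψ) : T ψ = 0 := by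
  obtain ⟨χ, hχ, hχψ, hTχ⟩ := exists_cutoff_of_locally_isVanishingOn hT hψ
  convert hTχ ψ
  ext ξ
  rw [SchwartzMap.smulLeftCLM_apply_apply hχ]
  by_cases hξ : ξ ∈ tsupport ψ
  · simp [hχψ hξ]
  · simp [image_eq_zero_of_notMem_tsupport hξ]

end Gluing

/-- The modulation of `f` by the character of frequency `ξ₀`; it translates the Fourier transform
by `ξ₀`. -/
def modulate {E : Type*} [NormedAddCommGroup E] [InnerProductSpace ℝ E] (ξ₀ : E) (f : E → ℂ)
    (x : E) : ℂ :=
  𝐞 (inner ℝ x ξ₀) • f x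

section Fourier

variable {E : Type*} [NormedAddCommGroup E] [InnerProductSpace ℝ E]

lemma norm_modulate (ξ₀ : E) (f : E → ℂ) (x : E) : ‖modulate ξ₀ f x‖ = ‖f x‖ := by
  rw [modulate, Circle.norm_smul]

variable [FiniteDimensional ℝ E] [MeasurableSpace E] [BorelSpace E] {κ w : E → ℂ}

local notation "𝐦" => ContinuousLinearMap.mul ℂ ℂ

lemma integrable_modulate {f : E → ℂ} (ξ₀ : E) (hf : Integrable f) :
    Integrable (modulate ξ₀ f) := by
  simpa only [inner_neg_right, neg_neg] using!
    (Real.fourierIntegral_convergent_iff (f := f) (-ξ₀)).2 hf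

lemma integral_modulate_neg (ξ₀ : E) (f : E → ℂ) : ∫ x, modulate (-ξ₀) f x = 𝓕 f ξ₀ := by
  simp only [modulate, inner_neg_right, Real.fourier_eq]

lemma fourier_modulate (ξ₀ : E) (f : E → ℂ) (ξ : E) : 𝓕 (modulate ξ₀ f) ξ = 𝓕 f (ξ - ξ₀) := by
  simp only [Real.fourier_eq, modulate, smul_smul, ← AddChar.map_add_eq_mul, inner_sub_right,
    neg_sub, neg_add_eq_sub]

lemma convolution_modulate (ξ₀ : E) (f g : E → ℂ) :
    f ⋆[𝐦] modulate ξ₀ g = modulate ξ₀ (modulate (-ξ₀) f ⋆[𝐦] g) := by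
  ext x
  simp only [convolution_def, modulate, Circle.smul_def, ← integral_smul]
  refine integral_congr_ae (ae_of_all _ fun y => ?_)
  simp only [← Circle.smul_def, ContinuousLinearMap.mul_apply', smul_mul_assoc, mul_smul_comm,
    smul_smul, ← AddChar.map_add_eq_mul, inner_sub_left, inner_neg_right, ← sub_eq_add_neg]

lemma fourier_dilate {r : ℝ} (hr : r ≠ 0) (f : E → ℂ) (ξ : E) :
    𝓕 (dilate r f) ξ = 𝓕 f (r⁻¹ • ξ) := by
  rw [Real.fourier_eq, Real.fourier_eq, ← integral_dilate hr (fun x => 𝐞 _ • f x)]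
  congr 1 with x
  rw [dilate, dilate, inner_smul_left, inner_smul_right, smul_comm]
  simp [mul_inv_cancel_left₀ hr]

lemma fourier_coe_fourierInv (ψ : 𝓢(E, ℂ)) : 𝓕 (⇑(𝓕⁻ ψ : 𝓢(E, ℂ))) = ψ := by
  rw [← SchwartzMap.fourier_coe, FourierTransform.fourier_fourierInv_eq]

lemma exists_approx_eigenvector (hκ : Integrable κ) (ξ₀ : E) {ε : ℝ} (hε : 0 < ε) :
    ∃ w : E → ℂ, Integrable w ∧ 𝓕 w =ᶠ[𝓝 ξ₀] 1 ∧ ∫ x, ‖(κ ⋆[𝐦] w - 𝓕 κ ξ₀ • w) x‖ < ε := by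
  obtain ⟨χ, -, hχ, -⟩ := exists_schwartzMap_eventuallyEq_one_tsupport_subset (E := E) (ξ := 0)
    univ_mem
  have h_lim := tendsto_convolution_dilate (integrable_modulate (-ξ₀) hκ) (𝓕⁻ χ).integrable
  obtain ⟨r, hr_lt, hr⟩ := ((h_lim.eventually_lt_const hε).and (eventually_ne_atTop 0)).exists
  set v := dilate r⁻¹ (𝓕⁻ χ : 𝓢(E, ℂ)) with hv
  refine ⟨modulate ξ₀ v, integrable_modulate ξ₀
    (integrable_dilate (inv_ne_zero hr) (𝓕⁻ χ).integrable), ?_, ?_⟩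
  · have h_fourier (ξ : E) : 𝓕 (modulate ξ₀ v) ξ = χ (r • (ξ - ξ₀)) := by
      rw [fourier_modulate, hv, fourier_dilate (inv_ne_zero hr), inv_inv, fourier_coe_fourierInv]
    have h_tendsto : Tendsto (fun ξ => r • (ξ - ξ₀)) (𝓝 ξ₀) (𝓝 0) :=
      (show Continuous fun ξ => r • (ξ - ξ₀) by fun_prop).tendsto' _ _ (by simp)
    filter_upwards [h_tendsto.eventually hχ] with ξ hξ
    rw [h_fourier, hξ]
    rfl
  · have h_eq : κ ⋆[𝐦] modulate ξ₀ v - 𝓕 κ ξ₀ • modulate ξ₀ v =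
        modulate ξ₀ (modulate (-ξ₀) κ ⋆[𝐦] v - (∫ x, modulate (-ξ₀) κ x) • v) := by
      rw [convolution_modulate, integral_modulate_neg]
      ext x
      simp only [modulate, Pi.sub_apply, Pi.smul_apply, smul_sub]
      rw [smul_comm]
    rw [h_eq]
    simpa only [norm_modulate] using hr_lt

lemma convolution_eq_self_of_fourier_mul_eq (hw : Integrable w) (h : 𝓢(E, ℂ))
    (hwh : 𝓕 w * 𝓕 (h : E → ℂ) = 𝓕 (h : E → ℂ)) : w ⋆[𝐦] h = h := by
  have h_fourier : 𝓕 (w ⋆[𝐦] h) = 𝓕 (h : E → ℂ) := by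
    ext ξ
    rw [Real.fourier_mul_convolution_eq hw h.integrable, ← Pi.mul_apply, hwh]
  have h_cont : Continuous (w ⋆[𝐦] h) := by
    refine BddAbove.continuous_convolution_right_of_integrable _ ?_ hw h.continuous
    exact ⟨_, forall_mem_range.2 (h.norm_le_seminorm ℝ)⟩
  have h_fourier_int : Integrable (𝓕 (h : E → ℂ)) := (𝓕 h).integrable
  rw [← h_cont.fourierInv_fourier_eq (hw.integrable_convolution _ h.integrable)
    (h_fourier ▸ h_fourier_int), h_fourier,
    h.continuous.fourierInv_fourier_eq h.integrable h_fourier_int]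

end Fourier

section Wiener

variable {E : Type*} [NormedAddCommGroup E] [InnerProductSpace ℝ E] [FiniteDimensional ℝ E]
  [MeasurableSpace E] [BorelSpace E] {κ g φ : E → ℂ}

local notation "𝐦" => ContinuousLinearMap.mul ℂ ℂ

/-- The map `ψ ↦ 𝓕⁻ψ ⋆ φ`. It vanishes on a set `U` in the sense of distributions when `U` is
disjoint from the spectrum of `φ`, the support of the tempered distribution `𝓕φ`. -/
def spectralConvolution (φ : E → ℂ) (hφ : MemLp φ ∞) : 𝓢(E, ℂ) →+ (E → ℂ) :=
  AddMonoidHom.ofMapSub (fun ψ => ⇑(𝓕⁻ ψ : 𝓢(E, ℂ)) ⋆[𝐦] φ) fun ψ₁ ψ₂ => by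
    rw [sub_eq_add_neg, FourierTransform.fourierInv_add, FourierTransform.fourierInv_neg,
      ← sub_eq_add_neg]
    exact sub_convolution_of_memLp_top (𝓕⁻ ψ₁).integrable (𝓕⁻ ψ₂).integrable hφ

lemma exists_isVanishingOn_spectralConvolution (hκ : Integrable κ) (hφ : MemLp φ ∞)
    (hκφ : κ ⋆[𝐦] φ = 0) {ξ₀ : E} (hξ₀ : 𝓕 κ ξ₀ ≠ 0) :
    ∃ U ∈ 𝓝 ξ₀, Distribution.IsVanishingOn (spectralConvolution φ hφ) U := by
  obtain ⟨w, hw, hw_one, hκw⟩ := exists_approx_eigenvector hκ ξ₀ (norm_pos_iff.2 hξ₀)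
  refine ⟨_, hw_one, fun ψ hψ => ?_⟩
  refine convolution_eq_zero_of_approx_eigenvector hκ hw (𝓕⁻ ψ).integrable hφ hκφ
    (convolution_eq_self_of_fourier_mul_eq hw _ ?_) hκw
  rw [fourier_coe_fourierInv]
  ext ξ
  by_cases hξ : ξ ∈ tsupport ψ
  · simp [show 𝓕 w ξ = 1 from hψ hξ]
  · simp [image_eq_zero_of_notMem_tsupport hξ]

lemma convolution_eq_zero_of_hasCompactSupport_fourier (hκ : Integrable κ) (hφ : MemLp φ ∞)
    (hκφ : κ ⋆[𝐦] φ = 0) (hκ_ne : ∀ ξ, 𝓕 κ ξ ≠ 0) (h : 𝓢(E, ℂ))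
    (hh : HasCompactSupport (𝓕 (h : E → ℂ))) : h ⋆[𝐦] φ = 0 := by
  have h_zero : spectralConvolution φ hφ (𝓕 h) = 0 := map_eq_zero_of_locally_isVanishingOn
    (fun ξ => exists_isVanishingOn_spectralConvolution hκ hφ hκφ (hκ_ne ξ)) hh
  simpa [spectralConvolution] using h_zero

lemma convolution_eq_zero_of_fourier_ne_zero (hκ : Integrable κ) (hφ : MemLp φ ∞)
    (hκφ : κ ⋆[𝐦] φ = 0) (hκ_ne : ∀ ξ, 𝓕 κ ξ ≠ 0) (hg : Integrable g) : g ⋆[𝐦] φ = 0 := by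
  obtain ⟨χ, hχ, hχ_one, -⟩ := exists_schwartzMap_eventuallyEq_one_tsupport_subset (E := E)
    (ξ := 0) univ_mem
  set W : 𝓢(E, ℂ) := 𝓕⁻ χ
  have hW_fourier : 𝓕 (W : E → ℂ) = χ := fourier_coe_fourierInv χ
  have hW_integral : ∫ x, W x = 1 := by
    calc ∫ x, W x = 𝓕 (W : E → ℂ) 0 := by simp [Real.fourier_eq]
      _ = 1 := by rw [hW_fourier, hχ_one.eq_of_nhds, Pi.one_apply]
  have h_dilate {r : ℝ} (hr : r ≠ 0) : dilate r W ⋆[𝐦] φ = 0 := by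
    obtain ⟨W', hW'⟩ := exists_schwartzMap_coe_eq_dilate hr W
    rw [← hW']
    refine convolution_eq_zero_of_hasCompactSupport_fourier hκ hφ hκφ hκ_ne W' ?_
    have hW'_fourier : 𝓕 (W' : E → ℂ) = fun ξ => χ (r⁻¹ • ξ) := by
      ext ξ
      rw [hW', fourier_dilate hr, hW_fourier]
    exact hW'_fourier ▸
      hχ.comp_homeomorph (Homeomorph.smulOfNeZero r⁻¹ (inv_ne_zero hr))
  have h_lim := tendsto_dilate_convolution W.integrable hg
  simp only [hW_integral, one_smul] at h_lim
  refine convolution_eq_zero_of_tendsto (F := fun r => dilate r W ⋆[𝐦] g) ?_ hg hφ ?_ h_lim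
  all_goals filter_upwards [eventually_ne_atTop 0] with r hr
  · exact (integrable_dilate hr W.integrable).integrable_convolution _ hg
  · rw [convolution_mul_comm (dilate r W), convolution_convolution_of_memLp_top hg
      (integrable_dilate hr W.integrable) hφ, h_dilate hr, convolution_zero]

theorem ae_eq_zero_of_convolution_eq_zero (hκ : Integrable κ) (hφ : MemLp φ ∞)
    (hκφ : κ ⋆[𝐦] φ = 0) (hκ_ne : ∀ ξ, 𝓕 κ ξ ≠ 0) : φ =ᵐ[volume] 0 := by
  refine ae_eq_zero_of_integral_contDiff_smul_eq_zero (hφ.locallyIntegrable le_top)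
    fun g hg hg_supp => ?_
  have hg_int : Integrable fun x => (g (-x) : ℂ) :=
    (hg.continuous.integrable_of_hasCompactSupport hg_supp).comp_neg.ofReal
  have h_zero := congrFun (convolution_eq_zero_of_fourier_ne_zero hκ hφ hκφ hκ_ne hg_int) 0
  rw [convolution_eq_swap] at h_zero
  simpa using h_zero

end Wiener

section Real

variable {E : Type*} [NormedAddCommGroup E] [InnerProductSpace ℝ E] [FiniteDimensional ℝ E]
  [MeasurableSpace E] [BorelSpace E] {κ φ : E → ℝ}

local notation "𝐦" => ContinuousLinearMap.mul ℂ ℂ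

lemma integral_mul_cos_eq_re_fourier (hκ : Integrable κ) (ξ : E) :
    ∫ t, κ t * Real.cos (2 * Real.pi * inner ℝ t ξ) = (𝓕 (fun t => (κ t : ℂ)) ξ).re := by
  have h_int : Integrable fun t => 𝐞 (-inner ℝ t ξ) • (κ t : ℂ) :=
    (Real.fourierIntegral_convergent_iff ξ).2 hκ.ofReal
  rw [Real.fourier_eq, ← reCLM_apply, ← reCLM.integral_comp_comm h_int]
  congr 1 with t
  rw [Circle.smul_def, Real.fourierChar_apply, smul_eq_mul, reCLM_apply, re_mul_ofReal,
    exp_ofReal_mul_I_re, mul_neg, Real.cos_neg, mul_comm]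

lemma fourier_comp_add_left (κ : E → ℂ) (s ξ : E) :
    𝓕 (fun t => κ (s + t)) ξ = 𝐞 (inner ℝ s ξ) • 𝓕 κ ξ := by
  simp_rw [add_comm s]
  exact congrFun (VectorFourier.fourierIntegral_comp_add_right 𝐞 volume (innerₗ E) κ s) ξ

lemma integral_add_mul_cos_eq_zero (hκ : Integrable κ) {ξ : E}
    (hξ : 𝓕 (fun t => (κ t : ℂ)) ξ = 0) (s : E) :
    ∫ t, κ (s + t) * Real.cos (2 * Real.pi * inner ℝ t ξ) = 0 := by
  rw [integral_mul_cos_eq_re_fourier (hκ.comp_add_left s),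
    fourier_comp_add_left (fun t => (κ t : ℂ)), hξ, smul_zero, zero_re]

lemma ofReal_convolution_comp_neg (κ φ : E → ℝ) (s : E) :
    ((fun t => (κ t : ℂ)) ⋆[𝐦] fun t => (φ (-t) : ℂ)) s = ↑(∫ t, κ (s + t) * φ t) := by
  rw [convolution_def, ← integral_add_left_eq_self _ s, ← integral_complex_ofReal]
  simp

lemma ae_eq_zero_of_integral_add_mul_eq_zero (hκ : Integrable κ) (hφ : MemLp φ ∞)
    (hκφ : ∀ s, ∫ t, κ (s + t) * φ t = 0) (hκ_ne : ∀ ξ, 𝓕 (fun t => (κ t : ℂ)) ξ ≠ 0) :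
    φ =ᵐ[volume] 0 := by
  have h_neg := Measure.measurePreserving_neg (volume : Measure E)
  have h_zero : (fun t => (φ (-t) : ℂ)) =ᵐ[volume] 0 := by
    refine ae_eq_zero_of_convolution_eq_zero hκ.ofReal
      (hφ.comp_measurePreserving h_neg).ofReal ?_ hκ_ne
    ext s
    exact (ofReal_convolution_comp_neg κ φ s).trans (by rw [hκφ, ofReal_zero, Pi.zero_apply])
  filter_upwards [h_neg.quasiMeasurePreserving.ae h_zero] with t ht
  simpa using ht

theorem forall_ae_eq_zero_iff_fourier_ne_zero (hκ : Integrable κ) :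
    (∀ φ : E → ℝ, MemLp φ ∞ → (∀ s, ∫ t, κ (s + t) * φ t = 0) → φ =ᵐ[volume] 0) ↔
      ∀ ξ, 𝓕 (fun t => (κ t : ℂ)) ξ ≠ 0 := by
  refine ⟨fun h ξ hξ => ?_, fun hκ_ne φ hφ hκφ =>
    ae_eq_zero_of_integral_add_mul_eq_zero hκ hφ hκφ hκ_ne⟩
  have h_cont : Continuous fun t : E => Real.cos (2 * Real.pi * inner ℝ t ξ) := by fun_prop
  have h_bdd : MemLp (fun t : E => Real.cos (2 * Real.pi * inner ℝ t ξ)) ∞ :=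
    memLp_top_of_bound h_cont.aestronglyMeasurable 1 (.of_forall fun _ => Real.abs_cos_le_one _)
  have h_zero := (h_cont.ae_eq_iff_eq volume continuous_zero).1
    (h _ h_bdd (integral_add_mul_cos_eq_zero hκ hξ))
  simpa using congrFun h_zero 0

end Real

section LogCoordinates

variable {n : ℕ} {F : Type*} [NormedAddCommGroup F] [NormedSpace ℝ F]
  {a c : Fin n → ℝ} {k f : (Fin n → ℝ) → ℝ}

/-- The coordinatewise exponential, which parametrises the positive orthant. -/
def piExp (t : Fin n → ℝ) : Fin n → ℝ := fun i => Real.exp (t i)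

lemma piExp_injective : Function.Injective (piExp (n := n)) := fun _ _ h =>
  funext fun i => Real.exp_injective (congrFun h i)

lemma range_piExp : range (piExp (n := n)) = posOrth n :=
  Subset.antisymm (range_subset_iff.2 fun t i => Real.exp_pos (t i)) fun x hx =>
    ⟨fun i => Real.log (x i), funext fun i => Real.exp_log (hx i)⟩

lemma continuous_piExp : Continuous (piExp (n := n)) := by
  unfold piExp
  fun_prop

lemma hasFDerivAt_piExp (t : Fin n → ℝ) :
    HasFDerivAt piExp (ContinuousLinearMap.pi fun i =>
      (Real.exp (t i) • ContinuousLinearMap.id ℝ ℝ).comp (ContinuousLinearMap.proj i)) t :=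
  hasFDerivAt_pi.2 fun i => (hasFDerivAt_apply i t).exp

lemma det_fderiv_piExp (t : Fin n → ℝ) :
    (ContinuousLinearMap.pi fun i =>
      (Real.exp (t i) • ContinuousLinearMap.id ℝ ℝ).comp
        (ContinuousLinearMap.proj (R := ℝ) (φ := fun _ : Fin n => ℝ) i)).det =
      Real.exp (∑ i, t i) := by
  rw [ContinuousLinearMap.det_pi, Real.exp_sum]
  simp [ContinuousLinearMap.det]

lemma map_piExp_withDensity :
    (volume.withDensity fun t => ENNReal.ofReal (Real.exp (∑ i, t i))).map (piExp (n := n)) =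
      volume.restrict (posOrth n) := by
  have h := map_withDensity_abs_det_fderiv_eq_addHaar volume nullMeasurableSet_univ
    (fun t _ => (hasFDerivAt_piExp (n := n) t).hasFDerivWithinAt) piExp_injective.injOn
  simpa only [Measure.restrict_univ, det_fderiv_piExp, Real.abs_exp, image_univ, range_piExp]
    using h

/-- The coordinatewise exponential on Euclidean space, whose inner product is the one used by the
Fourier transform; its values lie in the space `Fin n → ℝ` on which `posOrth` is defined. -/
def orthExp (t : EuclideanSpace ℝ (Fin n)) : Fin n → ℝ := piExp t.ofLp

lemma range_orthExp : range (orthExp (n := n)) = posOrth n :=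
  ((WithLp.ofLp_surjective 2).range_comp piExp).trans range_piExp

lemma measurableEmbedding_orthExp : MeasurableEmbedding (orthExp (n := n)) :=
  (continuous_piExp.measurableEmbedding piExp_injective).comp
    (MeasurableEquiv.toLp 2 (Fin n → ℝ)).symm.measurableEmbedding

lemma measurePreserving_orthExp :
    MeasurePreserving (orthExp (n := n))
      (volume.withDensity fun t => ENNReal.ofReal (Real.exp (∑ i, t i)))
      (volume.restrict (posOrth n)) := by
  refine ⟨measurableEmbedding_orthExp.measurable, ?_⟩
  rw [← map_piExp_withDensity]
  ext s hs
  have h_exp : MeasurableSet (piExp ⁻¹' s) := continuous_piExp.measurable hs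
  rw [Measure.map_apply measurableEmbedding_orthExp.measurable hs,
    Measure.map_apply continuous_piExp.measurable hs, withDensity_apply _ h_exp,
    withDensity_apply _ (measurableEmbedding_orthExp.measurable hs)]
  exact (PiLp.volume_preserving_ofLp (Fin n)).setLIntegral_comp_preimage h_exp
    (f := fun t => ENNReal.ofReal (Real.exp (∑ i, t i))) (by fun_prop)

lemma ae_withDensity_exp_sum :
    ae ((volume : Measure (EuclideanSpace ℝ (Fin n))).withDensity
      fun t => ENNReal.ofReal (Real.exp (∑ i, t i))) = ae volume := by
  refine le_antisymm (withDensity_absolutelyContinuous _ _).ae_le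
    (withDensity_absolutelyContinuous' ?_ (.of_forall fun t => ?_)).ae_le
  · exact Measurable.aemeasurable (by fun_prop)
  · exact (ENNReal.ofReal_pos.2 (Real.exp_pos _)).ne'

lemma ae_restrict_posOrth_iff {p : (Fin n → ℝ) → Prop} :
    (∀ᵐ x ∂volume.restrict (posOrth n), p x) ↔ ∀ᵐ t, p (orthExp t) := by
  rw [← measurePreserving_orthExp.map_eq, measurableEmbedding_orthExp.ae_map_iff,
    ae_withDensity_exp_sum]

lemma aestronglyMeasurable_restrict_posOrth_iff {X : Type*} [TopologicalSpace X]
    {g : (Fin n → ℝ) → X} :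
    AEStronglyMeasurable g (volume.restrict (posOrth n)) ↔
      AEStronglyMeasurable (g ∘ orthExp) volume := by
  rw [← measurePreserving_orthExp.aestronglyMeasurable_comp_iff measurableEmbedding_orthExp]
  exact ⟨fun h => h.mono_ac <| Measure.ae_le_iff_absolutelyContinuous.1 ae_withDensity_exp_sum.ge,
    fun h => h.mono_ac <| Measure.ae_le_iff_absolutelyContinuous.1 ae_withDensity_exp_sum.le⟩

lemma setIntegral_posOrth_eq (g : (Fin n → ℝ) → F) :
    ∫ x in posOrth n, g x =
      ∫ t : EuclideanSpace ℝ (Fin n), Real.exp (∑ i, t i) • g (orthExp t) := by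
  rw [← measurePreserving_orthExp.integral_comp measurableEmbedding_orthExp,
    integral_withDensity_eq_integral_toReal_smul (by fun_prop)
      (.of_forall fun _ => ENNReal.ofReal_lt_top)]
  simp only [ENNReal.toReal_ofReal (Real.exp_pos _).le]

lemma integrableOn_posOrth_iff {g : (Fin n → ℝ) → F} :
    IntegrableOn g (posOrth n) ↔ Integrable
      fun t : EuclideanSpace ℝ (Fin n) => Real.exp (∑ i, t i) • g (orthExp t) := by
  rw [IntegrableOn, ← measurePreserving_orthExp.integrable_comp_emb measurableEmbedding_orthExp,
    integrable_withDensity_iff_integrable_smul' (by fun_prop)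
      (.of_forall fun _ => ENNReal.ofReal_lt_top)]
  simp only [ENNReal.toReal_ofReal (Real.exp_pos _).le, Function.comp_apply]

/-- The function `x ↦ x ^ a * f x` on the positive orthant, written in the coordinates
`t = log x`. -/
def logPullback (a : Fin n → ℝ) (f : (Fin n → ℝ) → ℝ) (t : EuclideanSpace ℝ (Fin n)) : ℝ :=
  Real.exp (∑ i, a i * t i) * f (orthExp t)

lemma prod_orthExp_rpow (a : Fin n → ℝ) (t : EuclideanSpace ℝ (Fin n)) :
    ∏ i, orthExp t i ^ a i = Real.exp (∑ i, a i * t i) := by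
  rw [Real.exp_sum]
  exact Finset.prod_congr rfl fun i _ => by rw [orthExp, piExp, ← Real.exp_mul, mul_comm]

lemma prod_orthExp_cpow (z : Fin n → ℂ) (t : EuclideanSpace ℝ (Fin n)) :
    ∏ i, (orthExp t i : ℂ) ^ z i = exp (∑ i, z i * t i) := by
  rw [exp_sum]
  refine Finset.prod_congr rfl fun i _ => ?_
  rw [orthExp, piExp, cpow_def_of_ne_zero (by simp), ← ofReal_log (Real.exp_pos _).le,
    Real.log_exp, mul_comm]

lemma logPullback_surjective (a : Fin n → ℝ) : Function.Surjective (logPullback a) := fun φ =>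
  ⟨fun x => Real.exp (-∑ i, a i * Real.log (x i)) * φ (WithLp.toLp 2 fun i => Real.log (x i)), by
    ext t
    simp [logPullback, orthExp, piExp, ← mul_assoc, ← Real.exp_add]⟩

lemma logPullback_ae_eq_zero_iff :
    logPullback a f =ᵐ[volume] 0 ↔ ∀ᵐ x ∂volume.restrict (posOrth n), f x = 0 := by
  rw [ae_restrict_posOrth_iff]
  simp [EventuallyEq, logPullback]

lemma aestronglyMeasurable_logPullback_iff : AEStronglyMeasurable (logPullback a f) ↔
    AEStronglyMeasurable f (volume.restrict (posOrth n)) := by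
  rw [aestronglyMeasurable_restrict_posOrth_iff]
  have h_cont : Continuous fun t : EuclideanSpace ℝ (Fin n) => Real.exp (∑ i, a i * t i) := by
    fun_prop
  refine ⟨fun h => ?_, fun h => h_cont.aestronglyMeasurable.mul h⟩
  have h_inv := (h_cont.inv₀ fun _ => Real.exp_ne_zero _).aestronglyMeasurable.mul h
  exact h_inv.congr (.of_forall fun t => inv_mul_cancel_left₀ (Real.exp_ne_zero _) _)

lemma memLp_top_logPullback_iff : MemLp (logPullback a f) ∞ ↔ MemLinfw n a f := by
  have h_bdd (K : ℝ) : (∀ᵐ x ∂volume.restrict (posOrth n), |f x * ∏ i, x i ^ a i| ≤ K) ↔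
      ∀ᵐ t, ‖logPullback a f t‖ ≤ K := by
    simp only [ae_restrict_posOrth_iff, prod_orthExp_rpow, logPullback, Real.norm_eq_abs, mul_comm]
  simp only [MemLinfw, ← aestronglyMeasurable_logPullback_iff (a := a), h_bdd]
  exact ⟨fun h => ⟨h.1, _, ae_le_lpNorm_exponent_top h⟩,
    fun ⟨h, K, hK⟩ => memLp_top_of_bound h K hK⟩

lemma integrable_logPullback_iff : Integrable (logPullback c k) ↔ MemL1w n c k := by
  rw [MemL1w, integrableOn_posOrth_iff]
  refine integrable_congr (.of_forall fun t => ?_)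
  have h_exp : Real.exp (∑ i, c i * t i) =
      Real.exp (∑ i, t i) * Real.exp (∑ i, (c i - 1) * t i) := by
    rw [← Real.exp_add, ← Finset.sum_add_distrib]
    exact congrArg Real.exp (Finset.sum_congr rfl fun i _ => by ring)
  simp only [logPullback, prod_orthExp_rpow, smul_eq_mul, h_exp]
  ring

lemma setIntegral_posOrth_dilation_eq (c : Fin n → ℝ) (k f : (Fin n → ℝ) → ℝ)
    (s : EuclideanSpace ℝ (Fin n)) :
    ∫ x in posOrth n, k (fun i => orthExp s i * x i) * f x = Real.exp (-∑ i, c i * s i) *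
      ∫ t, logPullback c k (s + t) * logPullback (fun i => 1 - c i) f t := by
  rw [setIntegral_posOrth_eq, ← integral_const_mul]
  congr 1 with t
  have h_add : (fun i => orthExp s i * orthExp t i) = orthExp (s + t) :=
    funext fun i => (Real.exp_add _ _).symm
  have h_exp : Real.exp (∑ i, t i) = Real.exp (-∑ i, c i * s i) *
      (Real.exp (∑ i, c i * (s + t) i) * Real.exp (∑ i, (1 - c i) * t i)) := by
    rw [← Real.exp_add, ← Real.exp_add, ← Finset.sum_neg_distrib, ← Finset.sum_add_distrib,
      ← Finset.sum_add_distrib]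
    exact congrArg Real.exp (Finset.sum_congr rfl fun i _ => by rw [PiLp.add_apply]; ring)
  rw [h_add, h_exp, smul_eq_mul, logPullback, logPullback]
  ring

lemma forall_setIntegral_posOrth_dilation_eq_zero_iff :
    (∀ p ∈ posOrth n, ∫ x in posOrth n, k (fun i => p i * x i) * f x = 0) ↔
      ∀ s, ∫ t, logPullback c k (s + t) * logPullback (fun i => 1 - c i) f t = 0 := by
  conv_lhs => rw [← range_orthExp, forall_mem_range, range_orthExp]
  simp [setIntegral_posOrth_dilation_eq c]

lemma mellinT_eq_fourier_logPullback (c ξ : Fin n → ℝ) (k : (Fin n → ℝ) → ℝ) :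
    mellinT n k (fun i => (c i : ℂ) + I * (ξ i : ℂ)) =
      𝓕 (fun t => (logPullback c k t : ℂ)) (-(2 * Real.pi)⁻¹ • WithLp.toLp 2 ξ) := by
  rw [mellinT, setIntegral_posOrth_eq, Real.fourier_eq']
  congr 1 with t
  have h_inner : -2 * Real.pi * inner ℝ t (-(2 * Real.pi)⁻¹ • WithLp.toLp 2 ξ) =
      ∑ i, ξ i * t i := by
    rw [inner_smul_right, PiLp.inner_apply]
    field_simp
    simp
  have h_exp : (Real.exp (∑ i, t i) : ℂ) * exp (∑ i, ((c i : ℂ) + I * ξ i - 1) * t i) =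
      exp ((∑ i, ξ i * t i : ℝ) * I) * Real.exp (∑ i, c i * t i) := by
    push_cast
    rw [← exp_add, ← exp_add, Finset.sum_mul, ← Finset.sum_add_distrib, ← Finset.sum_add_distrib]
    exact congrArg exp (Finset.sum_congr rfl fun i _ => by ring)
  rw [h_inner, prod_orthExp_cpow, real_smul, smul_eq_mul, logPullback, ofReal_mul, ← mul_assoc,
    ← mul_assoc, h_exp]

lemma forall_mellinT_ne_zero_iff :
    (∀ ξ : Fin n → ℝ, mellinT n k (fun i => (c i : ℂ) + I * (ξ i : ℂ)) ≠ 0) ↔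
      ∀ ξ, 𝓕 (fun t => (logPullback c k t : ℂ)) ξ ≠ 0 := by
  simp only [mellinT_eq_fourier_logPullback]
  have h_surj : Function.Surjective fun ξ : Fin n → ℝ =>
      (-(2 * Real.pi)⁻¹ • WithLp.toLp 2 ξ : EuclideanSpace ℝ (Fin n)) :=
    (MulAction.surjective₀ (neg_ne_zero.2 (inv_ne_zero Real.two_pi_pos.ne'))).comp
      (WithLp.toLp_surjective 2)
  exact (h_surj.forall (p := fun ξ => 𝓕 (fun t => (logPullback c k t : ℂ)) ξ ≠ 0)).symm

end LogCoordinates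

/-- Lemma: for `k ∈ L¹_c(ℝ^n_+)`, the equation `∫_{ℝ^n_+} k(p₁x₁,…,pₙxₙ) f(x) dx = 0`
for all `p ∈ ℝ^n_+` has only the trivial solution `f = 0` a.e. in `L^∞_{I-c}(ℝ^n_+)`
iff `(Mk)(c + iξ) ≠ 0` for every `ξ ∈ ℝ^n`. -/
theorem mult_shift_equation_trivial_Linf_iff_mellin_no_zeros
    (n : ℕ) (hn : 1 ≤ n) (c : Fin n → ℝ) (k : (Fin n → ℝ) → ℝ)
    (hk : MemL1w n c k) :
    (∀ f : (Fin n → ℝ) → ℝ, MemLinfw n (fun i => 1 - c i) f →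
        (∀ p ∈ posOrth n, ∫ x in posOrth n, k (fun i => p i * x i) * f x = 0) →
        ∀ᵐ x ∂(volume.restrict (posOrth n)), f x = 0) ↔
      ∀ ξ : Fin n → ℝ, mellinT n k (fun i => (c i : ℂ) + I * (ξ i : ℂ)) ≠ 0 := by
  rw [forall_mellinT_ne_zero_iff,
    ← forall_ae_eq_zero_iff_fourier_ne_zero (integrable_logPullback_iff.2 hk),
    (logPullback_surjective fun i => 1 - c i).forall]
  refine forall_congr' fun f => ?_
  rw [memLp_top_logPullback_iff, logPullback_ae_eq_zero_iff,
    forall_setIntegral_posOrth_dilation_eq_zero_iff]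
end
end

section
/- (Multidimensional Wiener approximation theorem in L^1.) Let n ≥ 1 and f ∈ L^1(ℝ^n). Then the linear span of the translates { x ↦ f(x − a) : a ∈ ℝ^n } is dense in L^1(ℝ^n) if and only if the Fourier transform ℱf has no zeros on ℝ^n. -/
open MeasureTheory Complex Set

noncomputable section

/-- The Fourier transform `ℱf(ξ) = (2π)^{-n/2} ∫_{ℝ^n} e^{-iξ·x} f(x) dx`. -/
def fourierT (n : ℕ) (f : (Fin n → ℝ) → ℂ) (ξ : Fin n → ℝ) : ℂ :=
  (((2 * Real.pi) ^ (-(n : ℝ) / 2) : ℝ) : ℂ) *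
    ∫ x : Fin n → ℝ, Complex.exp (-I * ∑ i, (ξ i : ℂ) * (x i : ℂ)) * f x

/-!
A closed translation-invariant subspace of `L¹` absorbs convolution by `L¹` functions, so if `𝓕 f`
can be inverted by Fourier transforms of `L¹` functions over compact sets, the closed span of the
translates of `f` contains every `v` whose Fourier transform has compact support: if `𝓕 g · 𝓕 f = 1`
on that support, then `v = (g * v) * f`. Such `v` are dense. Near a point `ξ₀` with `𝓕 f ξ₀ ≠ 0` an
inverse comes from a Neumann series, because convolution with `f` acts on functions whose Fourier
transform is concentrated near `ξ₀` almost as multiplication by `𝓕 f ξ₀`; finitely many local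
inverses then glue over a compact set. Conversely, a zero `ξ` of `𝓕 f` puts all translates of `f`
in the kernel of the continuous functional `u ↦ 𝓕 u ξ`.
-/

open Filter Topology Module FourierTransform SchwartzMap
open scoped ENNReal RealInnerProductSpace

section Translation

variable {G F 𝕜 : Type*} [AddGroup G] [MeasurableSpace G] [MeasurableAdd G]
  {μ : Measure G} [μ.IsAddRightInvariant] [NormedAddCommGroup F]
  [NormedField 𝕜] [NormedSpace 𝕜 F] {p : ℝ≥0∞} [Fact (1 ≤ p)]

variable (𝕜) in
/-- Translation `u ↦ u(· - a)`, as a linear isometry of `Lᵖ(G; F)`. -/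
def translateLp (a : G) : Lp F p μ →ₗᵢ[𝕜] Lp F p μ :=
  Lp.compMeasurePreservingₗᵢ 𝕜 (fun x => x - a) (measurePreserving_sub_right μ a)

theorem coeFn_translateLp (a : G) (u : Lp F p μ) :
    translateLp 𝕜 a u =ᵐ[μ] fun x => u (x - a) :=
  Lp.coeFn_compMeasurePreserving u (measurePreserving_sub_right μ a)

variable (𝕜) in
/-- The closed linear span in `Lᵖ(G; F)` of the translates of `u`. -/
def closedTranslateSpan (u : Lp F p μ) : Submodule 𝕜 (Lp F p μ) :=
  (Submodule.span 𝕜 (range fun a : G => translateLp 𝕜 a u)).topologicalClosure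

theorem isClosed_closedTranslateSpan (u : Lp F p μ) :
    IsClosed (closedTranslateSpan 𝕜 u : Set (Lp F p μ)) :=
  Submodule.isClosed_topologicalClosure _

theorem translateLp_mem_closedTranslateSpan (a : G) (u : Lp F p μ) :
    translateLp 𝕜 a u ∈ closedTranslateSpan 𝕜 u :=
  Submodule.le_topologicalClosure _ (Submodule.subset_span (mem_range_self a))

theorem closedTranslateSpan_le {S : Submodule 𝕜 (Lp F p μ)} (hS : IsClosed (S : Set (Lp F p μ)))
    {u : Lp F p μ} (hu : ∀ a, translateLp 𝕜 a u ∈ S) : closedTranslateSpan 𝕜 u ≤ S :=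
  Submodule.topologicalClosure_minimal _ (Submodule.span_le.2 (range_subset_iff.2 hu)) hS

theorem translateLp_zero (u : Lp F p μ) : translateLp 𝕜 0 u = u := by
  refine Lp.ext ?_
  filter_upwards [coeFn_translateLp (𝕜 := 𝕜) 0 u] with x hx
  rw [hx, sub_zero]

theorem translateLp_toL1 {f : G → F} (hf : Integrable f μ) (a : G) :
    translateLp 𝕜 a (hf.toL1 f) = (hf.comp_sub_right a).toL1 (fun x => f (x - a)) := by
  refine Lp.ext ?_
  filter_upwards [coeFn_translateLp (𝕜 := 𝕜) a (hf.toL1 f), (hf.comp_sub_right a).coeFn_toL1,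
    (measurePreserving_sub_right μ a).quasiMeasurePreserving.ae hf.coeFn_toL1] with x h₁ h₂ h₃
  rw [h₁, h₂, h₃]

theorem norm_integral_smul_translateLp_le [NormedSpace ℝ F] (h : G →₁[μ] 𝕜) (u : Lp F p μ) :
    ‖∫ a, h a • translateLp 𝕜 a u ∂μ‖ ≤ ‖h‖ * ‖u‖ := by
  refine (norm_integral_le_integral_norm _).trans_eq ?_
  simp only [norm_smul, LinearIsometry.norm_map, integral_mul_const, L1.norm_eq_integral_norm]

end Translation

section ContinuousTranslation

instance fact_one_ne_top : Fact ((1 : ℝ≥0∞) ≠ ∞) := ⟨ENNReal.one_ne_top⟩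

variable {G F 𝕜 : Type*} [AddGroup G] [TopologicalSpace G] [IsTopologicalAddGroup G]
  [MeasurableSpace G] [BorelSpace G]
  {μ : Measure G} [μ.IsAddRightInvariant] [IsLocallyFiniteMeasure μ] [μ.InnerRegularCompactLTTop]
  [NormedAddCommGroup F] [NormedField 𝕜] [NormedSpace 𝕜 F]
  {p : ℝ≥0∞} [Fact (1 ≤ p)] [Fact (p ≠ ∞)]

theorem continuous_translateLp (u : Lp F p μ) :
    Continuous fun a : G => translateLp 𝕜 a u := by
  let subRight : C(G, C(G, G)) :=
    (ContinuousMap.mk (fun z : G × G => z.2 - z.1) (by fun_prop)).curry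
  exact (continuous_const (y := u)).compMeasurePreservingLp subRight.continuous
    (fun a => measurePreserving_sub_right μ a) Fact.out

theorem integrable_smul_translateLp [SecondCountableTopology G] {h : G → 𝕜} (hh : Integrable h μ)
    {φ : G → G} (hφ : Continuous φ) (u : Lp F p μ) :
    Integrable (fun a => h a • translateLp 𝕜 (φ a) u) μ := by
  have hmeas : AEStronglyMeasurable (fun a => translateLp 𝕜 (φ a) u) μ :=
    ((continuous_translateLp u).comp hφ).aestronglyMeasurable
  refine (hh.norm.mul_const ‖u‖).mono' (hh.aestronglyMeasurable.smul hmeas) (.of_forall fun a => ?_)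
  rw [norm_smul, LinearIsometry.norm_map]

end ContinuousTranslation

section Convolution

variable {G F : Type*} [AddGroup G] [TopologicalSpace G] [IsTopologicalAddGroup G]
  [SecondCountableTopology G] [MeasurableSpace G] [BorelSpace G]
  {μ : Measure G} [μ.IsAddRightInvariant] [IsLocallyFiniteMeasure μ] [μ.InnerRegularCompactLTTop]
  [NormedAddCommGroup F] [NormedSpace ℂ F] {p : ℝ≥0∞} [Fact (1 ≤ p)] [Fact (p ≠ ∞)]

theorem integrable_coeFn_smul_translateLp (h : G →₁[μ] ℂ) (u : Lp F p μ) :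
    Integrable (fun a => h a • translateLp ℂ a u) μ :=
  integrable_smul_translateLp (L1.integrable_coeFn h) continuous_id u

/-- Convolution `h * u = ∫ h(a) u(· - a) da` of `h ∈ L¹(G)` with `u ∈ Lᵖ(G; F)`, as a Bochner
integral of translates in `Lᵖ`. -/
def convLp : (G →₁[μ] ℂ) →L[ℂ] Lp F p μ →L[ℂ] Lp F p μ :=
  LinearMap.mkContinuous₂
    (LinearMap.mk₂ ℂ (fun h u => ∫ a, h a • translateLp ℂ a u ∂μ)
      (fun h₁ h₂ u => by
        rw [← integral_add (integrable_coeFn_smul_translateLp h₁ u)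
          (integrable_coeFn_smul_translateLp h₂ u)]
        refine integral_congr_ae ?_
        filter_upwards [Lp.coeFn_add h₁ h₂] with a ha
        rw [ha, Pi.add_apply, add_smul])
      (fun c h u => by
        rw [← integral_smul]
        refine integral_congr_ae ?_
        filter_upwards [Lp.coeFn_smul c h] with a ha
        rw [ha, Pi.smul_apply, smul_assoc])
      (fun h u₁ u₂ => by
        simp only [map_add, smul_add]
        exact integral_add (integrable_coeFn_smul_translateLp h u₁)
          (integrable_coeFn_smul_translateLp h u₂))
      (fun c h u => by
        simp only [map_smul, smul_comm _ c]
        exact integral_smul c _))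
    1 (fun h u => by simpa using norm_integral_smul_translateLp_le h u)

theorem convLp_apply (h : G →₁[μ] ℂ) (u : Lp F p μ) :
    convLp h u = ∫ a, h a • translateLp ℂ a u ∂μ := rfl

theorem norm_convLp_le (h : G →₁[μ] ℂ) :
    ‖(convLp h : Lp F p μ →L[ℂ] Lp F p μ)‖ ≤ ‖h‖ :=
  ContinuousLinearMap.opNorm_le_bound _ (norm_nonneg h) (norm_integral_smul_translateLp_le h)

theorem convLp_mem_of_translateLp_mem [CompleteSpace F] {S : Submodule ℂ (Lp F p μ)}
    (hS : IsClosed (S : Set (Lp F p μ))) {u : Lp F p μ} (hu : ∀ a, translateLp ℂ a u ∈ S)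
    (h : G →₁[μ] ℂ) : convLp h u ∈ S := by
  rw [← Submodule.Quotient.mk_eq_zero S]
  calc S.mkQL (convLp h u) = ∫ a, S.mkQL (h a • translateLp ℂ a u) ∂μ :=
        (S.mkQL.integral_comp_comm (integrable_coeFn_smul_translateLp h u)).symm
    _ = ∫ _, 0 ∂μ := integral_congr_ae <| .of_forall fun a =>
        (Submodule.Quotient.mk_eq_zero S).2 (S.smul_mem (h a) (hu a))
    _ = 0 := integral_zero _ _

theorem exists_eq_add_convLp [CompleteSpace F] {k : G →₁[μ] ℂ} (hk : ‖k‖ < 1) (v : Lp F p μ) :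
    ∃ y, y = v + convLp k y := by
  obtain ⟨T, hT⟩ := isUnit_one_sub_of_norm_lt_one ((norm_convLp_le (F := F) (p := p) k).trans_lt hk)
  refine ⟨(↑T⁻¹ : Lp F p μ →L[ℂ] Lp F p μ) v, ?_⟩
  have hinv : (T : Lp F p μ →L[ℂ] Lp F p μ) ((↑T⁻¹ : Lp F p μ →L[ℂ] Lp F p μ) v) = v :=
    DFunLike.congr_fun T.mul_inv v
  rw [hT] at hinv
  exact sub_eq_iff_eq_add.1 hinv

end Convolution

section ScaledTranslation

variable {E F : Type*} [NormedAddCommGroup E] [NormedSpace ℝ E] [SecondCountableTopology E]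
  [MeasurableSpace E] [BorelSpace E]
  {μ : Measure E} [μ.IsAddRightInvariant] [IsLocallyFiniteMeasure μ] [μ.InnerRegularCompactLTTop]
  [NormedAddCommGroup F] [NormedSpace ℂ F] [CompleteSpace F]
  {p : ℝ≥0∞} [Fact (1 ≤ p)] [Fact (p ≠ ∞)]

theorem tendsto_integral_smul_translateLp_smul {h : E → ℂ} (hh : Integrable h μ) (u : Lp F p μ) :
    Tendsto (fun ε : ℝ => ∫ a, h a • translateLp ℂ (ε • a) u ∂μ) (𝓝 0)
      (𝓝 ((∫ a, h a ∂μ) • u)) := by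
  rw [← integral_smul_const]
  refine tendsto_integral_filter_of_dominated_convergence (fun a => ‖h a‖ * ‖u‖)
    (.of_forall fun ε =>
      (integrable_smul_translateLp hh (continuous_const_smul ε) u).aestronglyMeasurable)
    (.of_forall fun ε => .of_forall fun a => by rw [norm_smul, LinearIsometry.norm_map])
    (hh.norm.mul_const _) (.of_forall fun a => ?_)
  have hcont : Continuous fun ε : ℝ => translateLp ℂ (ε • a) u :=
    (continuous_translateLp u).comp (by fun_prop)
  simpa only [zero_smul, translateLp_zero] using (hcont.tendsto 0).const_smul (h a)

end ScaledTranslation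

section Fourier

variable {E : Type*} [NormedAddCommGroup E] [InnerProductSpace ℝ E] [FiniteDimensional ℝ E]
  [MeasurableSpace E] [BorelSpace E]

/-- Evaluation `u ↦ 𝓕 u ξ` of the Fourier transform, as a continuous functional on `L¹(E)`. -/
def fourierAt (ξ : E) : (E →₁[volume] ℂ) →L[ℂ] ℂ :=
  (BoundedContinuousFunction.evalCLM ℂ ξ).comp (Real.Lp.fourierTransformCLM E ℂ)

theorem fourierAt_apply (ξ : E) (u : E →₁[volume] ℂ) : fourierAt ξ u = 𝓕 (u : E → ℂ) ξ := rfl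

theorem fourierAt_eq_of_ae_eq {u : E →₁[volume] ℂ} {f : E → ℂ} (h : u =ᵐ[volume] f) (ξ : E) :
    fourierAt ξ u = 𝓕 f ξ :=
  Real.fourier_congr_ae h ξ

theorem fourierAt_eq_integral (ξ : E) (u : E →₁[volume] ℂ) :
    fourierAt ξ u = ∫ x, (𝐞 (-⟪x, ξ⟫) : ℂ) * u x := by
  simp only [fourierAt_apply, Real.fourier_eq, Circle.smul_def, smul_eq_mul]

theorem fourierAt_translateLp (ξ a : E) (u : E →₁[volume] ℂ) :
    fourierAt ξ (translateLp ℂ a u) = 𝐞 (-⟪a, ξ⟫) * fourierAt ξ u := by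
  have h := congrFun (VectorFourier.fourierIntegral_comp_add_right 𝐞 volume (innerₗ E) u (-a)) ξ
  simp only [← sub_eq_add_neg, map_neg, LinearMap.neg_apply, innerₗ_apply_apply,
    Circle.smul_def, smul_eq_mul] at h
  rw [fourierAt_eq_of_ae_eq (coeFn_translateLp a u)]
  exact h

theorem fourierAt_convLp (ξ : E) (h u : E →₁[volume] ℂ) :
    fourierAt ξ (convLp h u) = fourierAt ξ h * fourierAt ξ u := by
  rw [convLp_apply, ← (fourierAt ξ).integral_comp_comm (integrable_coeFn_smul_translateLp h u),
    fourierAt_eq_integral ξ h, ← integral_mul_const]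
  refine integral_congr_ae (.of_forall fun a => ?_)
  simp only [map_smul, fourierAt_translateLp, smul_eq_mul]
  ring

theorem exists_schwartzMap_fourier_eq {g : E → ℝ} (hg : ContDiff ℝ (⊤ : ℕ∞) g)
    (hgs : HasCompactSupport g) : ∃ φ : 𝓢(E, ℂ), ∀ ξ, 𝓕 (φ : E → ℂ) ξ = g ξ := by
  let γ : 𝓢(E, ℂ) := HasCompactSupport.toSchwartzMap (f := fun x => (g x : ℂ))
    (hgs.comp_left ofReal_zero) (ofRealCLM.contDiff.comp hg)
  refine ⟨𝓕⁻ γ, fun ξ => ?_⟩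
  rw [← SchwartzMap.fourier_coe, fourier_fourierInv_eq]
  rfl

/-- The multiplication formula `∫ 𝓕 φ · u = ∫ φ · 𝓕 u` reduces this to test functions. -/
theorem eq_zero_of_fourierAt_eq_zero {u : E →₁[volume] ℂ} (hu : ∀ ξ, fourierAt ξ u = 0) :
    u = 0 := by
  rw [Lp.eq_zero_iff_ae_eq_zero]
  refine ae_eq_zero_of_integral_contDiff_smul_eq_zero (L1.integrable_coeFn u).locallyIntegrable
    fun g hg hgs => ?_
  obtain ⟨φ, hφ⟩ := exists_schwartzMap_fourier_eq hg hgs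
  calc ∫ x, g x • u x = ∫ x, 𝓕 (φ : E → ℂ) x • u x := by simp only [hφ, coe_smul]
    _ = ∫ ξ, φ ξ • fourierAt ξ u := by
        have h := VectorFourier.integral_fourierIntegral_smul_eq_flip (L := innerₗ E)
          Real.continuous_fourierChar continuous_inner (φ.integrable (μ := volume))
          (L1.integrable_coeFn u)
        rwa [flip_innerₗ] at h
    _ = 0 := by simp only [hu, smul_zero, integral_zero]

theorem eq_of_fourierAt_eq {u v : E →₁[volume] ℂ} (h : ∀ ξ, fourierAt ξ u = fourierAt ξ v) :
    u = v :=
  sub_eq_zero.1 <| eq_zero_of_fourierAt_eq_zero fun ξ => by rw [map_sub, h, sub_self]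

variable (E) in
theorem exists_fourierAt_eq_one_on_ball : ∃ w : E →₁[volume] ℂ,
    (∀ ξ : E, ‖ξ‖ ≤ 1 → fourierAt ξ w = 1) ∧ ∀ ξ : E, 2 ≤ ‖ξ‖ → fourierAt ξ w = 0 := by
  let bump : ContDiffBump (0 : E) := ⟨1, 2, one_pos, one_lt_two⟩
  obtain ⟨φ, hφ⟩ := exists_schwartzMap_fourier_eq bump.contDiff bump.hasCompactSupport
  have hw (ξ : E) : fourierAt ξ (φ.toLp 1 volume) = bump ξ := by
    rw [fourierAt_eq_of_ae_eq (φ.coeFn_toLp 1 volume), hφ]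
  refine ⟨φ.toLp 1 volume, fun ξ hξ => ?_, fun ξ hξ => ?_⟩
  · rw [hw, bump.one_of_mem_closedBall (mem_closedBall_zero_iff.2 hξ), ofReal_one]
  · rw [hw, bump.zero_of_le_dist (by rwa [dist_zero_right]), ofReal_zero]

end Fourier

section ModulatedDilation

variable {E : Type*} [NormedAddCommGroup E] [InnerProductSpace ℝ E] [FiniteDimensional ℝ E]
  [MeasurableSpace E] [BorelSpace E]

theorem integral_abs_pow_finrank_smul_comp_smul {F : Type*} [NormedAddCommGroup F]
    [NormedSpace ℝ F] {ε : ℝ} (hε : ε ≠ 0) (φ : E → F) :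
    ∫ x, |ε ^ finrank ℝ E| • φ (ε • x) = ∫ y, φ y := by
  rw [integral_smul, Measure.integral_comp_smul, smul_smul, ← abs_mul,
    mul_inv_cancel₀ (pow_ne_zero _ hε), abs_one, one_smul]

theorem integrable_modulatedDilation {ε : ℝ} (hε : ε ≠ 0) (ξ₀ : E) (u : E →₁[volume] ℂ) :
    Integrable fun x => |ε ^ finrank ℝ E| • ((𝐞 ⟪x, ξ₀⟫ : ℂ) * u (ε • x)) := by
  have hcont : Continuous fun x : E => (𝐞 ⟪x, ξ₀⟫ : ℂ) := by fun_prop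
  have h := ((L1.integrable_coeFn u).comp_smul hε).bdd_mul hcont.aestronglyMeasurable
    (.of_forall fun x => (Circle.norm_coe _).le)
  exact h.smul |ε ^ finrank ℝ E|

variable {ε : ℝ} (hε : ε ≠ 0) (ξ₀ : E)

/-- The isometry `u ↦ |ε|ᵈ e^{2πi⟨·, ξ₀⟩} u(ε ·)` of `L¹(E)`, `d = dim E`; on the Fourier side it
is the change of variables `ξ ↦ ε⁻¹ (ξ - ξ₀)`. -/
def modulatedDilation : (E →₁[volume] ℂ) →ₗᵢ[ℂ] (E →₁[volume] ℂ) where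
  toFun u := (integrable_modulatedDilation hε ξ₀ u).toL1 _
  map_add' u v := by
    rw [← Integrable.toL1_add, Integrable.toL1_eq_toL1_iff]
    filter_upwards [(Measure.quasiMeasurePreserving_smul volume hε).ae (Lp.coeFn_add u v)] with x hx
    rw [hx, Pi.add_apply, Pi.add_apply, mul_add, smul_add]
  map_smul' c u := by
    rw [RingHom.id_apply, ← Integrable.toL1_smul', Integrable.toL1_eq_toL1_iff]
    filter_upwards [(Measure.quasiMeasurePreserving_smul volume hε).ae (Lp.coeFn_smul c u)]
      with x hx
    rw [hx, Pi.smul_apply, Pi.smul_apply, mul_smul_comm, smul_comm]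
  norm_map' u := by
    dsimp only [LinearMap.coe_mk, AddHom.coe_mk]
    rw [L1.norm_of_fun_eq_integral_norm, L1.norm_eq_integral_norm]
    refine Eq.trans ?_ (integral_abs_pow_finrank_smul_comp_smul hε _)
    simp only [norm_smul, norm_mul, Circle.norm_coe, one_mul, smul_eq_mul, Real.norm_eq_abs,
      abs_abs]

theorem coeFn_modulatedDilation (u : E →₁[volume] ℂ) : modulatedDilation hε ξ₀ u =ᵐ[volume]
    fun x => |ε ^ finrank ℝ E| • ((𝐞 ⟪x, ξ₀⟫ : ℂ) * u (ε • x)) :=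
  (integrable_modulatedDilation hε ξ₀ u).coeFn_toL1

theorem fourierAt_modulatedDilation (ξ : E) (u : E →₁[volume] ℂ) :
    fourierAt ξ (modulatedDilation hε ξ₀ u) = fourierAt (ε⁻¹ • (ξ - ξ₀)) u := by
  rw [fourierAt_eq_of_ae_eq (coeFn_modulatedDilation hε ξ₀ u), Real.fourier_eq,
    fourierAt_eq_integral]
  refine Eq.trans (integral_congr_ae (.of_forall fun x => ?_))
    (integral_abs_pow_finrank_smul_comp_smul hε _)
  have hphase : -⟪ε • x, ε⁻¹ • (ξ - ξ₀)⟫ = -⟪x, ξ⟫ + ⟪x, ξ₀⟫ := by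
    rw [real_inner_smul_left, real_inner_smul_right, mul_inv_cancel_left₀ hε, inner_sub_right]
    ring
  simp only [hphase, AddChar.map_add_eq_mul, Circle.coe_mul, Circle.smul_def, smul_eq_mul,
    real_smul]
  ring

theorem translateLp_modulatedDilation (a : E) (u : E →₁[volume] ℂ) :
    translateLp ℂ a (modulatedDilation hε ξ₀ u) =
      (𝐞 (-⟪a, ξ₀⟫) : ℂ) • modulatedDilation hε ξ₀ (translateLp ℂ (ε • a) u) := by
  refine Lp.ext ?_
  filter_upwards [coeFn_translateLp (𝕜 := ℂ) a (modulatedDilation hε ξ₀ u),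
    (measurePreserving_sub_right volume a).quasiMeasurePreserving.ae
      (coeFn_modulatedDilation hε ξ₀ u),
    Lp.coeFn_smul (𝐞 (-⟪a, ξ₀⟫) : ℂ) (modulatedDilation hε ξ₀ (translateLp ℂ (ε • a) u)),
    coeFn_modulatedDilation hε ξ₀ (translateLp ℂ (ε • a) u),
    (Measure.quasiMeasurePreserving_smul volume hε).ae (coeFn_translateLp (𝕜 := ℂ) (ε • a) u)]
    with x h₁ h₂ h₃ h₄ h₅
  rw [h₁, h₂, h₃, Pi.smul_apply, h₄, h₅, ← smul_sub, inner_sub_left, sub_eq_neg_add,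
    AddChar.map_add_eq_mul, Circle.coe_mul, mul_assoc, smul_eq_mul, mul_smul_comm]

theorem integrable_fourierChar_mul (ξ : E) (f : E →₁[volume] ℂ) :
    Integrable fun x => (𝐞 (-⟪x, ξ⟫) : ℂ) * f x := by
  simpa only [Circle.smul_def, smul_eq_mul] using
    (Real.fourierIntegral_convergent_iff ξ).2 (L1.integrable_coeFn f)

theorem convLp_modulatedDilation (f w : E →₁[volume] ℂ) :
    convLp f (modulatedDilation hε ξ₀ w) = modulatedDilation hε ξ₀
      (∫ a, ((𝐞 (-⟪a, ξ₀⟫) : ℂ) * f a) • translateLp ℂ (ε • a) w) := by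
  rw [convLp_apply, ← (modulatedDilation hε ξ₀).integral_comp_comm]
  refine integral_congr_ae (.of_forall fun a => ?_)
  simp only [translateLp_modulatedDilation, map_smul, smul_smul, mul_comm]

theorem convLp_modulatedDilation_zero (w u : E →₁[volume] ℂ) :
    convLp (modulatedDilation hε 0 w) u = ∫ b, w b • translateLp ℂ (ε⁻¹ • b) u := by
  rw [convLp_apply]
  refine Eq.trans (integral_congr_ae ?_) (integral_abs_pow_finrank_smul_comp_smul hε _)
  filter_upwards [coeFn_modulatedDilation hε 0 w] with a ha
  rw [ha, inner_zero_right, AddChar.map_zero_eq_one, Circle.coe_one, one_mul, inv_smul_smul₀ hε,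
    smul_assoc]

variable {ξ₀}

theorem exists_norm_convLp_modulatedDilation_sub_lt (f w : E →₁[volume] ℂ) {δ : ℝ}
    (hδ : 0 < δ) : ∃ (ε : ℝ) (hε : ε ≠ 0),
      ‖convLp f (modulatedDilation hε ξ₀ w) - fourierAt ξ₀ f • modulatedDilation hε ξ₀ w‖ < δ := by
  have hlim : Tendsto _ (𝓝[≠] (0 : ℝ)) _ :=
    (tendsto_integral_smul_translateLp_smul (integrable_fourierChar_mul ξ₀ f) w).mono_left
      nhdsWithin_le_nhds
  obtain ⟨ε, hlt, (hε : ε ≠ 0)⟩ :=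
    ((Metric.tendsto_nhds.1 hlim δ hδ).and self_mem_nhdsWithin).exists
  refine ⟨ε, hε, ?_⟩
  rwa [convLp_modulatedDilation, ← map_smul, ← map_sub, LinearIsometry.norm_map,
    fourierAt_eq_integral, ← dist_eq_norm]

theorem exists_dist_convLp_modulatedDilation_lt {w : E →₁[volume] ℂ}
    (hw : fourierAt 0 w = 1) (u : E →₁[volume] ℂ) {δ : ℝ} (hδ : 0 < δ) :
    ∃ (ε : ℝ) (hε : ε ≠ 0), dist (convLp (modulatedDilation hε 0 w) u) u < δ := by
  have hint : ∫ a, w a = 1 := by simpa [fourierAt_eq_integral] using hw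
  have hlim := (tendsto_integral_smul_translateLp_smul (L1.integrable_coeFn w) u).comp
    tendsto_inv_atTop_zero
  rw [hint, one_smul] at hlim
  obtain ⟨ε, hlt, hε⟩ := ((Metric.tendsto_nhds.1 hlim δ hδ).and (eventually_ne_atTop 0)).exists
  refine ⟨ε, hε, ?_⟩
  rwa [convLp_modulatedDilation_zero]

end ModulatedDilation

section WienerLemma

variable {E : Type*} [NormedAddCommGroup E] [InnerProductSpace ℝ E] [FiniteDimensional ℝ E]
  [MeasurableSpace E] [BorelSpace E]

theorem exists_fourierAt_eq_one_near_and_norm_sub_lt (f : E →₁[volume] ℂ) (ξ₀ : E) {δ : ℝ}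
    (hδ : 0 < δ) : ∃ P : E →₁[volume] ℂ, (∀ᶠ ξ in 𝓝 ξ₀, fourierAt ξ P = 1) ∧
      ‖convLp f P - fourierAt ξ₀ f • P‖ < δ := by
  obtain ⟨w, hw, -⟩ := exists_fourierAt_eq_one_on_ball E
  obtain ⟨ε, hε, hlt⟩ := exists_norm_convLp_modulatedDilation_sub_lt (ξ₀ := ξ₀) f w hδ
  refine ⟨modulatedDilation hε ξ₀ w, ?_, hlt⟩
  have hnear : ∀ᶠ ξ in 𝓝 ξ₀, ‖ε⁻¹ • (ξ - ξ₀)‖ < 1 := by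
    have hcont : Continuous fun ξ : E => ‖ε⁻¹ • (ξ - ξ₀)‖ := by fun_prop
    exact hcont.continuousAt.eventually_lt_const (by simp)
  filter_upwards [hnear] with ξ hξ
  rw [fourierAt_modulatedDilation, hw _ hξ.le]

/-- With `P` as above and `k = P - c⁻¹ f * P`, `c = 𝓕 f ξ₀`, a solution of `y = P + k * y`
satisfies `𝓕 y = 1 + (1 - c⁻¹ 𝓕 f) 𝓕 y` near `ξ₀`. -/
theorem exists_fourierAt_mul_eq_one_near {f : E →₁[volume] ℂ} {ξ₀ : E} (hf : fourierAt ξ₀ f ≠ 0) :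
    ∃ g : E →₁[volume] ℂ, ∀ᶠ ξ in 𝓝 ξ₀, fourierAt ξ g * fourierAt ξ f = 1 := by
  set c := fourierAt ξ₀ f
  obtain ⟨P, hP, hlt⟩ := exists_fourierAt_eq_one_near_and_norm_sub_lt f ξ₀ (norm_pos_iff.2 hf)
  have hk : ‖P - c⁻¹ • convLp f P‖ < 1 := by
    have hfactor : P - c⁻¹ • convLp f P = -c⁻¹ • (convLp f P - c • P) := by
      rw [smul_sub, smul_smul, neg_mul, inv_mul_cancel₀ hf]
      module
    rw [hfactor, norm_smul, norm_neg, norm_inv, inv_mul_lt_one₀ (norm_pos_iff.2 hf)]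
    exact hlt
  obtain ⟨y, hy⟩ := exists_eq_add_convLp hk P
  refine ⟨c⁻¹ • y, ?_⟩
  filter_upwards [hP] with ξ hξ
  have hyξ := congrArg (fourierAt ξ) hy
  rw [map_add, fourierAt_convLp] at hyξ
  simp only [map_sub, map_smul, fourierAt_convLp, hξ, smul_eq_mul] at hyξ ⊢
  linear_combination hyξ

/-- Local inverses `g₁`, `g₂` on `s`, `t` glue to an inverse on `s ∪ t` because
`1 - (1 - g₁ f) (1 - g₂ f) = (g₁ + g₂ - g₁ f g₂) f`. -/
theorem exists_fourierAt_mul_eq_one_of_isCompact {f : E →₁[volume] ℂ} {K : Set E}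
    (hK : IsCompact K) (hf : ∀ ξ ∈ K, fourierAt ξ f ≠ 0) :
    ∃ g : E →₁[volume] ℂ, ∀ ξ ∈ K, fourierAt ξ g * fourierAt ξ f = 1 := by
  refine hK.induction_on (p := fun s => ∃ g : E →₁[volume] ℂ, ∀ ξ ∈ s,
    fourierAt ξ g * fourierAt ξ f = 1) ⟨0, by simp⟩ ?_ ?_ ?_
  · rintro s t hst ⟨g, hg⟩
    exact ⟨g, fun ξ hξ => hg ξ (hst hξ)⟩
  · rintro s t ⟨g₁, hg₁⟩ ⟨g₂, hg₂⟩
    refine ⟨g₁ + g₂ - convLp (convLp g₁ f) g₂, fun ξ hξ => ?_⟩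
    simp only [map_sub, map_add, fourierAt_convLp]
    rcases hξ with hs | ht
    · linear_combination (1 - fourierAt ξ g₂ * fourierAt ξ f) * hg₁ ξ hs
    · linear_combination (1 - fourierAt ξ g₁ * fourierAt ξ f) * hg₂ ξ ht
  · intro ξ₀ hξ₀
    obtain ⟨g, hg⟩ := exists_fourierAt_mul_eq_one_near (hf ξ₀ hξ₀)
    exact ⟨_, mem_nhdsWithin_of_mem_nhds hg, g, fun ξ hξ => hξ⟩

theorem exists_fourierAt_eq_zero_off_compact_and_dist_lt (u : E →₁[volume] ℂ) {δ : ℝ}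
    (hδ : 0 < δ) : ∃ (v : E →₁[volume] ℂ) (K : Set E), IsCompact K ∧
      (∀ ξ ∉ K, fourierAt ξ v = 0) ∧ dist u v < δ := by
  obtain ⟨w, hw_one, hw_zero⟩ := exists_fourierAt_eq_one_on_ball E
  obtain ⟨ε, hε, hlt⟩ := exists_dist_convLp_modulatedDilation_lt (hw_one 0 (by simp)) u hδ
  rw [dist_comm] at hlt
  refine ⟨convLp (modulatedDilation hε 0 w) u, Metric.closedBall 0 (‖ε‖ * 2),
    isCompact_closedBall _ _, fun ξ hξ => ?_, hlt⟩
  rw [mem_closedBall_zero_iff, not_le] at hξ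
  have hlarge : 2 ≤ ‖ε⁻¹ • (ξ - 0)‖ := by
    rw [sub_zero, norm_smul, norm_inv, le_inv_mul_iff₀ (norm_pos_iff.2 hε)]
    exact hξ.le
  rw [fourierAt_convLp, fourierAt_modulatedDilation, hw_zero _ hlarge, zero_mul]

theorem mem_closedTranslateSpan_of_fourierAt_eq_zero_off_compact {f v : E →₁[volume] ℂ}
    {K : Set E} (hK : IsCompact K) (hf : ∀ ξ ∈ K, fourierAt ξ f ≠ 0)
    (hv : ∀ ξ ∉ K, fourierAt ξ v = 0) : v ∈ closedTranslateSpan ℂ f := by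
  obtain ⟨g, hg⟩ := exists_fourierAt_mul_eq_one_of_isCompact hK hf
  have hdiv : v = convLp (convLp g v) f := by
    refine eq_of_fourierAt_eq fun ξ => ?_
    simp only [fourierAt_convLp]
    by_cases hξ : ξ ∈ K
    · linear_combination -fourierAt ξ v * hg ξ hξ
    · rw [hv ξ hξ, mul_zero, zero_mul]
  rw [hdiv]
  exact convLp_mem_of_translateLp_mem (isClosed_closedTranslateSpan f)
    (translateLp_mem_closedTranslateSpan · f) _

theorem closedTranslateSpan_eq_top_iff (f : E →₁[volume] ℂ) :
    closedTranslateSpan ℂ f = ⊤ ↔ ∀ ξ, fourierAt ξ f ≠ 0 := by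
  constructor
  · intro htop ξ hξ
    have hle : closedTranslateSpan ℂ f ≤ (fourierAt ξ).ker := by
      refine closedTranslateSpan_le (fourierAt ξ).isClosed_ker fun a => ?_
      rw [LinearMap.mem_ker, ContinuousLinearMap.coe_coe, fourierAt_translateLp, hξ, mul_zero]
    obtain ⟨P, hP, -⟩ := exists_fourierAt_eq_one_near_and_norm_sub_lt f ξ one_pos
    have hmem : P ∈ (fourierAt ξ).ker := hle (htop ▸ Submodule.mem_top)
    exact one_ne_zero (hP.self_of_nhds.symm.trans hmem)
  · intro hf
    refine Submodule.eq_top_iff'.2 fun u => (isClosed_closedTranslateSpan f).closure_subset ?_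
    refine Metric.mem_closure_iff.2 fun δ hδ => ?_
    obtain ⟨v, K, hK, hv, hlt⟩ := exists_fourierAt_eq_zero_off_compact_and_dist_lt u hδ
    exact ⟨v, mem_closedTranslateSpan_of_fourierAt_eq_zero_off_compact hK (fun ξ _ => hf ξ) hv, hlt⟩

end WienerLemma

section RealComplex

variable {G : Type*} [AddGroup G] [MeasurableSpace G] [MeasurableAdd G]
  {μ : Measure G} [μ.IsAddRightInvariant] {p : ℝ≥0∞} [Fact (1 ≤ p)]

theorem translateLp_compLpL {F F' 𝕜 𝕜' : Type*} [NormedAddCommGroup F] [NormedAddCommGroup F']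
    [NontriviallyNormedField 𝕜] [NormedSpace 𝕜 F] [NormedSpace 𝕜 F'] [NormedField 𝕜']
    [NormedSpace 𝕜' F'] (L : F →L[𝕜] F') (a : G) (u : Lp F p μ) :
    translateLp 𝕜' a (L.compLpL p μ u) = L.compLpL p μ (translateLp 𝕜 a u) := by
  refine Lp.ext ?_
  filter_upwards [coeFn_translateLp (𝕜 := 𝕜') a (L.compLpL p μ u),
    (measurePreserving_sub_right μ a).quasiMeasurePreserving.ae (L.coeFn_compLpL u),
    L.coeFn_compLpL (translateLp 𝕜 a u), coeFn_translateLp (𝕜 := 𝕜) a u] with x h₁ h₂ h₃ h₄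
  rw [h₁, h₂, h₃, h₄]

theorem reCLM_compLpL_smul_ofRealCLM_compLpL {X : Type*} [MeasurableSpace X] {ν : Measure X}
    (c : ℂ) (u : Lp ℝ p ν) :
    reCLM.compLpL p ν (c • ofRealCLM.compLpL p ν u) = c.re • u := by
  refine Lp.ext ?_
  filter_upwards [reCLM.coeFn_compLpL (c • ofRealCLM.compLpL p ν u),
    Lp.coeFn_smul c (ofRealCLM.compLpL p ν u), ofRealCLM.coeFn_compLpL u, Lp.coeFn_smul c.re u]
    with x h₁ h₂ h₃ h₄
  rw [h₁, h₂, Pi.smul_apply, h₃, h₄, Pi.smul_apply]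
  exact re_mul_ofReal c (u x)

theorem ofRealCLM_compLpL_re_add_im {X : Type*} [MeasurableSpace X] {ν : Measure X}
    (v : Lp ℂ p ν) : ofRealCLM.compLpL p ν (reCLM.compLpL p ν v) +
      I • ofRealCLM.compLpL p ν (imCLM.compLpL p ν v) = v := by
  refine Lp.ext ?_
  filter_upwards [Lp.coeFn_add (ofRealCLM.compLpL p ν (reCLM.compLpL p ν v))
      (I • ofRealCLM.compLpL p ν (imCLM.compLpL p ν v)),
    Lp.coeFn_smul I (ofRealCLM.compLpL p ν (imCLM.compLpL p ν v)),
    ofRealCLM.coeFn_compLpL (reCLM.compLpL p ν v), ofRealCLM.coeFn_compLpL (imCLM.compLpL p ν v),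
    reCLM.coeFn_compLpL v, imCLM.coeFn_compLpL v] with x h₁ h₂ h₃ h₄ h₅ h₆
  rw [h₁, Pi.add_apply, h₂, Pi.smul_apply, h₃, h₄, h₅, h₆, smul_eq_mul, mul_comm I]
  exact re_add_im (v x)

theorem mem_span_range_iff_exists_fin {R M ι : Type*} [Semiring R] [AddCommMonoid M] [Module R M]
    {v : ι → M} {x : M} : x ∈ Submodule.span R (range v) ↔
      ∃ (N : ℕ) (b : Fin N → R) (a : Fin N → ι), ∑ j, b j • v (a j) = x := by
  rw [Submodule.mem_span_set']
  constructor
  · rintro ⟨N, b, y, hx⟩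
    choose a ha using fun j => (y j).2
    exact ⟨N, b, a, by simpa only [ha] using hx⟩
  · rintro ⟨N, b, a, hx⟩
    exact ⟨N, b, fun j => ⟨v (a j), mem_range_self _⟩, hx⟩

theorem reCLM_compLpL_mem_closedTranslateSpan {f : Lp ℝ p μ} {v : Lp ℂ p μ}
    (hv : v ∈ closedTranslateSpan ℂ (ofRealCLM.compLpL p μ f)) :
    reCLM.compLpL p μ v ∈ closedTranslateSpan ℝ f := by
  refine map_mem_closure (reCLM.compLpL p μ).continuous hv fun w hw => ?_
  obtain ⟨N, b, a, rfl⟩ := mem_span_range_iff_exists_fin.1 hw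
  refine mem_span_range_iff_exists_fin.2 ⟨N, fun j => (b j).re, a, ?_⟩
  rw [map_sum]
  refine Finset.sum_congr rfl fun j _ => ?_
  rw [translateLp_compLpL, reCLM_compLpL_smul_ofRealCLM_compLpL]

theorem ofRealCLM_compLpL_mem_closedTranslateSpan {f g : Lp ℝ p μ}
    (hg : g ∈ closedTranslateSpan ℝ f) :
    ofRealCLM.compLpL p μ g ∈ closedTranslateSpan ℂ (ofRealCLM.compLpL p μ f) := by
  refine closedTranslateSpan_le (S := ((closedTranslateSpan ℂ
    (ofRealCLM.compLpL p μ f)).restrictScalars ℝ).comap (ofRealCLM.compLpL p μ).toLinearMap)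
    ((isClosed_closedTranslateSpan _).preimage (ofRealCLM.compLpL p μ).continuous) (fun a => ?_) hg
  change ofRealCLM.compLpL p μ (translateLp ℝ a f) ∈ closedTranslateSpan ℂ _
  rw [← translateLp_compLpL (𝕜' := ℂ)]
  exact translateLp_mem_closedTranslateSpan a _

theorem closedTranslateSpan_ofRealCLM_compLpL_eq_top_iff {f : Lp ℝ p μ} :
    closedTranslateSpan ℂ (ofRealCLM.compLpL p μ f) = ⊤ ↔ closedTranslateSpan ℝ f = ⊤ := by
  simp only [Submodule.eq_top_iff']
  constructor
  · intro h g
    have hg := reCLM_compLpL_mem_closedTranslateSpan (h ((1 : ℂ) • ofRealCLM.compLpL p μ g))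
    rwa [reCLM_compLpL_smul_ofRealCLM_compLpL, one_re, one_smul] at hg
  · intro h v
    rw [← ofRealCLM_compLpL_re_add_im v]
    exact add_mem (ofRealCLM_compLpL_mem_closedTranslateSpan (h _))
      (Submodule.smul_mem _ I (ofRealCLM_compLpL_mem_closedTranslateSpan (h _)))

end RealComplex

section DenseTranslates

/-- The linear span of the translates of `f` is dense in `L¹(μ)`, spelled out on functions. -/
def HasDenseTranslates {G 𝕜 : Type*} [AddGroup G] [MeasurableSpace G] [NormedField 𝕜]
    (μ : Measure G) (f : G → 𝕜) : Prop :=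
  ∀ g : G → 𝕜, Integrable g μ → ∀ ε : ℝ, 0 < ε →
    ∃ (N : ℕ) (b : Fin N → 𝕜) (a : Fin N → G), ∫ x, ‖g x - ∑ j, b j * f (x - a j)‖ ∂μ < ε

theorem HasDenseTranslates.comp_measurableEquiv {G H 𝕜 : Type*} [AddGroup G] [AddGroup H]
    [MeasurableSpace G] [MeasurableSpace H] [NormedField 𝕜] {μ : Measure G} {ν : Measure H}
    {f : G → 𝕜} (hf : HasDenseTranslates μ f) {e : H ≃ᵐ G} (he : MeasurePreserving e ν μ)
    (hsub : ∀ x y, e (x - y) = e x - e y) : HasDenseTranslates ν (f ∘ e) := by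
  intro g hg ε hε
  obtain ⟨N, b, a, hlt⟩ := hf (g ∘ e.symm) (he.symm.integrable_comp_of_integrable hg) ε hε
  refine ⟨N, b, e.symm ∘ a, ?_⟩
  rw [← he.integral_comp e.measurableEmbedding] at hlt
  simpa only [Function.comp_apply, hsub, e.apply_symm_apply, e.symm_apply_apply] using hlt

variable {G 𝕜 : Type*} [AddGroup G] [MeasurableSpace G] [MeasurableAdd G]
  {μ : Measure G} [μ.IsAddRightInvariant] [NormedField 𝕜]

theorem dist_toL1_sum_smul_translateLp {f g : G → 𝕜} (hf : Integrable f μ) (hg : Integrable g μ)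
    {N : ℕ} (b : Fin N → 𝕜) (a : Fin N → G) :
    dist (hg.toL1 g) (∑ j, b j • translateLp 𝕜 (a j) (hf.toL1 f)) =
      ∫ x, ‖g x - ∑ j, b j * f (x - a j)‖ ∂μ := by
  have hterm : ∀ᵐ x ∂μ, ∀ j, (b j • translateLp 𝕜 (a j) (hf.toL1 f)) x = b j * f (x - a j) := by
    refine ae_all_iff.2 fun j => ?_
    rw [translateLp_toL1]
    filter_upwards [Lp.coeFn_smul (b j) ((hf.comp_sub_right (a j)).toL1 fun x => f (x - a j)),
      (hf.comp_sub_right (a j)).coeFn_toL1] with x h₁ h₂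
    rw [h₁, Pi.smul_apply, h₂, smul_eq_mul]
  rw [dist_eq_norm, L1.norm_eq_integral_norm]
  refine integral_congr_ae ?_
  filter_upwards [hterm, hg.coeFn_toL1,
    Lp.coeFn_sub (hg.toL1 g) (∑ j, b j • translateLp 𝕜 (a j) (hf.toL1 f)),
    Lp.coeFn_fun_finsetSum Finset.univ fun j => b j • translateLp 𝕜 (a j) (hf.toL1 f)]
    with x h₁ h₂ h₃ h₄
  simp only [h₁, h₂, h₃, h₄, Pi.sub_apply]

theorem hasDenseTranslates_iff_closedTranslateSpan_eq_top {f : G → 𝕜} (hf : Integrable f μ) :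
    HasDenseTranslates μ f ↔ closedTranslateSpan 𝕜 (hf.toL1 f) = ⊤ := by
  simp only [Submodule.eq_top_iff']
  constructor
  · intro h u
    refine Metric.mem_closure_iff.2 fun ε hε => ?_
    obtain ⟨N, b, a, hlt⟩ := h u (L1.integrable_coeFn u) ε hε
    rw [← dist_toL1_sum_smul_translateLp hf (L1.integrable_coeFn u), Integrable.toL1_coeFn] at hlt
    exact ⟨_, mem_span_range_iff_exists_fin.2 ⟨N, b, a, rfl⟩, hlt⟩
  · intro h g hg ε hε
    obtain ⟨v, hv, hlt⟩ := Metric.mem_closure_iff.1 (h (hg.toL1 g)) ε hε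
    obtain ⟨N, b, a, rfl⟩ := mem_span_range_iff_exists_fin.1 hv
    exact ⟨N, b, a, dist_toL1_sum_smul_translateLp hf hg b a ▸ hlt⟩

end DenseTranslates

theorem wiener_L1_general {E : Type*} [NormedAddCommGroup E] [InnerProductSpace ℝ E]
    [FiniteDimensional ℝ E] [MeasurableSpace E] [BorelSpace E] {f : E → ℝ} (hf : Integrable f) :
    HasDenseTranslates volume f ↔ ∀ ξ, 𝓕 (fun x => (f x : ℂ)) ξ ≠ 0 := by
  have hcoe : ofRealCLM.compLpL 1 volume (hf.toL1 f) =ᵐ[volume] fun x => (f x : ℂ) := by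
    filter_upwards [ofRealCLM.coeFn_compLpL (hf.toL1 f), hf.coeFn_toL1] with x h₁ h₂
    rw [h₁, h₂, ofRealCLM_apply]
  rw [hasDenseTranslates_iff_closedTranslateSpan_eq_top hf,
    ← closedTranslateSpan_ofRealCLM_compLpL_eq_top_iff, closedTranslateSpan_eq_top_iff]
  simp only [fourierAt_eq_of_ae_eq hcoe]

section Coordinates

variable {n : ℕ}

theorem fourierT_eq_mul_fourier (f : (Fin n → ℝ) → ℂ) (ξ : Fin n → ℝ) :
    fourierT n f ξ = (((2 * Real.pi) ^ (-(n : ℝ) / 2) : ℝ) : ℂ) *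
      𝓕 (fun x : EuclideanSpace ℝ (Fin n) => f x.ofLp) ((2 * Real.pi)⁻¹ • WithLp.toLp 2 ξ) := by
  rw [fourierT, Real.fourier_eq', ← (PiLp.volume_preserving_ofLp (Fin n)).integral_comp
    (MeasurableEquiv.toLp 2 (Fin n → ℝ)).symm.measurableEmbedding]
  congr 2 with x
  have hphase : -2 * Real.pi * ⟪x, (2 * Real.pi)⁻¹ • WithLp.toLp 2 ξ⟫ = -∑ i, ξ i * x i := by
    rw [real_inner_smul_right, EuclideanSpace.inner_eq_star_dotProduct, dotProduct]
    field_simp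
    simp
  rw [hphase, smul_eq_mul]
  push_cast
  ring_nf

theorem fourierT_ne_zero_iff (f : (Fin n → ℝ) → ℂ) : (∀ ξ, fourierT n f ξ ≠ 0) ↔
    ∀ ξ, 𝓕 (fun x : EuclideanSpace ℝ (Fin n) => f x.ofLp) ξ ≠ 0 := by
  have hconst : (((2 * Real.pi) ^ (-(n : ℝ) / 2) : ℝ) : ℂ) ≠ 0 :=
    ofReal_ne_zero.2 (Real.rpow_pos_of_pos Real.two_pi_pos _).ne'
  simp only [fourierT_eq_mul_fourier, mul_ne_zero_iff_left hconst]
  refine ⟨fun h ξ => ?_, fun h ξ => h _⟩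
  simpa only [WithLp.toLp_ofLp, inv_smul_smul₀ Real.two_pi_pos.ne'] using
    h ((2 * Real.pi) • ξ).ofLp

theorem hasDenseTranslates_comp_ofLp_iff {𝕜 : Type*} [NormedField 𝕜] {f : (Fin n → ℝ) → 𝕜} :
    HasDenseTranslates volume (fun x : EuclideanSpace ℝ (Fin n) => f x.ofLp) ↔
      HasDenseTranslates volume f :=
  ⟨fun h => h.comp_measurableEquiv (e := MeasurableEquiv.toLp 2 (Fin n → ℝ))
      (PiLp.volume_preserving_toLp (Fin n)) fun _ _ => rfl,
    fun h => h.comp_measurableEquiv (e := (MeasurableEquiv.toLp 2 (Fin n → ℝ)).symm)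
      (PiLp.volume_preserving_ofLp (Fin n)) fun _ _ => rfl⟩

end Coordinates

/-- Multidimensional Wiener approximation theorem in `L¹`: for `f ∈ L¹(ℝ^n)`, the
linear span of the translates `x ↦ f(x - a)`, `a ∈ ℝ^n`, is dense in `L¹(ℝ^n)` iff
the Fourier transform `ℱf` has no zeros on `ℝ^n`. -/
theorem wiener_L1
    (n : ℕ) (hn : 1 ≤ n) (f : (Fin n → ℝ) → ℝ) (hf : Integrable f) :
    (∀ g : (Fin n → ℝ) → ℝ, Integrable g → ∀ ε : ℝ, 0 < ε →
        ∃ (N : ℕ) (b : Fin N → ℝ) (a : Fin N → (Fin n → ℝ)),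
          ∫ x : Fin n → ℝ, |g x - ∑ j, b j * f (x - a j)| < ε) ↔
      ∀ ξ : Fin n → ℝ, fourierT n (fun x => (f x : ℂ)) ξ ≠ 0 := by
  have hf' : Integrable fun x : EuclideanSpace ℝ (Fin n) => f x.ofLp :=
    (PiLp.volume_preserving_ofLp (Fin n)).integrable_comp_of_integrable hf
  rw [fourierT_ne_zero_iff, ← wiener_L1_general hf']
  exact hasDenseTranslates_comp_ofLp_iff.symm
end
end

section
/- Let n ≥ 2, let q : ℝ^n_+ → ℝ satisfy the cost-function conditions, let c ∈ ℝ^n_+, set α = c_1 + ⋯ + c_n, let h ∈ L^1_α(ℝ^1_+), and let f ∈ L^1_{I−c}(ℝ^n_+) ∩ C(ℝ^n_+). Then for every z ∈ ℂ^n with Re z = c, writing s = z_1 + ⋯ + z_n, one has (M R^h_q f)(z) = Γ(s)^{−1} (Mf)(I − z) · (M e^{−q})(z) · (Mh)(s), where Γ is the Gamma function. -/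
open MeasureTheory Complex Set

noncomputable section

/-- `q` satisfies the cost-function conditions: `C¹` on `ℝ^n_+`, positive,
positively homogeneous of degree one, with bounded level sets. -/
def IsCostFun (n : ℕ) (q : (Fin n → ℝ) → ℝ) : Prop :=
  ContDiffOn ℝ 1 q (posOrth n) ∧
  (∀ x ∈ posOrth n, 0 < q x) ∧
  (∀ lam : ℝ, 0 < lam → ∀ x ∈ posOrth n, q (fun i => lam * x i) = lam * q x) ∧
  (∀ t : ℝ, Bornology.IsBounded {x | x ∈ posOrth n ∧ q x = t})

/-- Membership in `L¹_α(ℝ¹_+)`: measurable with `∫_0^∞ |h(t)| t^{α-1} dt < ∞`. -/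
def MemL1w1 (α : ℝ) (h : ℝ → ℝ) : Prop :=
  IntegrableOn (fun t => h t * t ^ (α - 1)) (Ioi (0 : ℝ))

/-- The operator `(R^h_q f)(p) = ∫_{ℝ^n_+} h(q(p₁x₁,…,pₙxₙ)) f(x) dx`. -/
def Rhq (n : ℕ) (q : (Fin n → ℝ) → ℝ) (h : ℝ → ℝ) (f : (Fin n → ℝ) → ℝ)
    (p : Fin n → ℝ) : ℝ :=
  ∫ x in posOrth n, h (q (fun i => p i * x i)) * f x

/-!
In logarithmic coordinates `x = e^a` the Mellin transform becomes the bilateral Laplace transform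
and `R^h_q f` becomes a correlation, so `(M R^h_q f)(z) = (Mf)(I - z) · (M (h ∘ q))(z)`.

Homogeneity of `q` says that `Q = log ∘ q ∘ exp` satisfies `Q (a + t • 1) = Q a + t`. The map
`(a, r) ↦ (a + (r - Q a) • 1, Q a)` therefore preserves the measure `da dr`, and it carries
`e^{⟨z, a⟩} G(Q a) · e^{s r} H(r)` to `e^{⟨z, a⟩} H(Q a) · e^{s r} G(r)`. Integrating both sides
with `G(t) = e^{-e^t}` and `H(t) = h(e^t)` gives
`(M (h ∘ q))(z) · Γ(s) = (M e^{-q})(z) · (Mh)(s)`. The same exchange shows that the integral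
defining `(M (h ∘ q))(z)` converges.
-/

theorem integral_integral_mul_comp_add {E : Type*} [AddCommGroup E] [MeasurableSpace E]
    {μ : Measure E} [MeasurableAdd₂ E] [MeasurableNeg E] [SFinite μ] [μ.IsAddLeftInvariant]
    [μ.IsNegInvariant] {F K : E → ℂ}
    (hF : Integrable F μ) (hK : Integrable K μ) :
    ∫ b, ∫ a, F a * K (b + a) ∂μ ∂μ = (∫ a, F a ∂μ) * ∫ a, K a ∂μ := by
  have hconv := integral_convolution (μ := μ) (ν := μ) (ContinuousLinearMap.mul ℂ ℂ) hF.comp_neg hK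
  simp only [ContinuousLinearMap.mul_apply', convolution, integral_neg_eq_self F μ] at hconv
  rw [← hconv]
  refine integral_congr_ae (.of_forall fun b => ?_)
  simp only
  rw [← integral_neg_eq_self]
  simp only [sub_eq_add_neg]

section LaplaceTransform

variable {E : Type*} [AddCommGroup E] [Module ℝ E] [MeasurableSpace E] {μ : Measure E}

/-- The bilateral Laplace transform `∫ e^{ℓ(a)} F(a) dμ(a)` at a complex-valued linear form `ℓ`.
In logarithmic coordinates it is the Mellin transform. -/
def laplaceTransform (μ : Measure E) (ℓ : E →ₗ[ℝ] ℂ) (F : E → ℂ) : ℂ :=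
  ∫ a, cexp (ℓ a) * F a ∂μ

/-- Absolute convergence of the integral defining `laplaceTransform μ ℓ F`. -/
def LaplaceConvergent (μ : Measure E) (ℓ : E →ₗ[ℝ] ℂ) (F : E → ℂ) : Prop :=
  Integrable (fun a => cexp (ℓ a) * F a) μ

theorem laplaceTransform_correlation [MeasurableAdd₂ E] [MeasurableNeg E] [SFinite μ]
    [μ.IsAddLeftInvariant] [μ.IsNegInvariant] {ℓ : E →ₗ[ℝ] ℂ} {F K : E → ℂ}
    (hF : LaplaceConvergent μ (-ℓ) F) (hK : LaplaceConvergent μ ℓ K) :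
    laplaceTransform μ ℓ (fun b => ∫ a, F a * K (b + a) ∂μ) =
      laplaceTransform μ (-ℓ) F * laplaceTransform μ ℓ K := by
  unfold laplaceTransform
  rw [← integral_integral_mul_comp_add hF hK]
  refine integral_congr_ae (.of_forall fun b => ?_)
  simp only [← integral_const_mul]
  refine integral_congr_ae (.of_forall fun a => ?_)
  have hexp : cexp (ℓ b) = cexp ((-ℓ) a) * cexp (ℓ (b + a)) := by
    rw [← Complex.exp_add, map_add, LinearMap.neg_apply]
    congr 1
    ring
  simp only [hexp]
  ring

end LaplaceTransform

section Fibres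

variable {E : Type*} [AddCommGroup E] [Module ℝ E] {Q : E → ℝ} {v : E}

/-- In the coordinates `a = a₀ + t • v` with `Q a₀ = 0`, this exchanges the fibre coordinate
`t = Q a` with the extra variable `r`. -/
def fibreSwap (Q : E → ℝ) (v : E) (p : E × ℝ) : E × ℝ :=
  (p.1 + (p.2 - Q p.1) • v, Q p.1)

theorem cexp_mul_comp_fibreSwap (hQv : ∀ a (t : ℝ), Q (a + t • v) = Q a + t)
    (ℓ : E →ₗ[ℝ] ℂ) (G H : ℝ → ℂ) (p : E × ℝ) :
    (cexp (ℓ (fibreSwap Q v p).1) * G (Q (fibreSwap Q v p).1)) *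
        (cexp (LinearMap.toSpanSingleton ℝ ℂ (ℓ v) (fibreSwap Q v p).2) * H (fibreSwap Q v p).2) =
      (cexp (ℓ p.1) * H (Q p.1)) * (cexp (LinearMap.toSpanSingleton ℝ ℂ (ℓ v) p.2) * G p.2) := by
  have hexp : cexp (ℓ (p.1 + (p.2 - Q p.1) • v)) * cexp (Q p.1 • ℓ v) =
      cexp (ℓ p.1) * cexp (p.2 • ℓ v) := by
    rw [← Complex.exp_add, ← Complex.exp_add, map_add, map_smul]
    congr 1
    module
  simp only [fibreSwap, hQv, LinearMap.toSpanSingleton_apply, add_sub_cancel]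
  linear_combination (G p.2 * H (Q p.1)) * hexp

variable [MeasurableSpace E] [MeasurableAdd₂ E] [MeasurableSMul₂ ℝ E] {μ : Measure E} [SFinite μ]
  [μ.IsAddRightInvariant] {ℓ : E →ₗ[ℝ] ℂ} {G H : ℝ → ℂ}

theorem measurePreserving_fibreSwap (hQ : Measurable Q)
    (hQv : ∀ a (t : ℝ), Q (a + t • v) = Q a + t) :
    MeasurePreserving (fibreSwap Q v) (μ.prod volume) (μ.prod volume) := by
  have subtract : MeasurePreserving (fun p : E × ℝ => (p.1, p.2 - Q p.1))
      (μ.prod volume) (μ.prod volume) :=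
    (MeasurePreserving.id μ).skew_product (g := fun a r => r - Q a) (by fun_prop)
      (.of_forall fun a => (measurePreserving_sub_right volume (Q a)).map_eq)
  have reflect : MeasurePreserving (fun p : E × ℝ => (p.1, Q p.1 - p.2))
      (μ.prod volume) (μ.prod volume) :=
    (MeasurePreserving.id μ).skew_product (g := fun a r => Q a - r) (by fun_prop)
      (.of_forall fun a => (Measure.measurePreserving_sub_left volume (Q a)).map_eq)
  have translate : MeasurePreserving (fun p : ℝ × E => (p.1, p.2 + p.1 • v))
      (volume.prod μ) (volume.prod μ) :=
    (MeasurePreserving.id volume).skew_product (g := fun (r : ℝ) a => a + r • v) (by fun_prop)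
      (.of_forall fun r => (measurePreserving_add_right μ (r • v)).map_eq)
  convert reflect.comp (Measure.measurePreserving_swap.comp
    (translate.comp (Measure.measurePreserving_swap.comp subtract))) using 1
  funext p
  simp [fibreSwap, hQv]

theorem integrable_prod_of_fibreSwap (hQ : Measurable Q)
    (hQv : ∀ a (t : ℝ), Q (a + t • v) = Q a + t)
    (hG : LaplaceConvergent μ ℓ (fun a => G (Q a)))
    (hH : LaplaceConvergent volume (LinearMap.toSpanSingleton ℝ ℂ (ℓ v)) H) :
    Integrable (fun p : E × ℝ => (cexp (ℓ p.1) * H (Q p.1)) *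
      (cexp (LinearMap.toSpanSingleton ℝ ℂ (ℓ v) p.2) * G p.2)) (μ.prod volume) :=
  ((measurePreserving_fibreSwap hQ hQv).integrable_comp_of_integrable (hG.mul_prod hH)).congr
    (.of_forall (cexp_mul_comp_fibreSwap hQv ℓ G H))

theorem LaplaceConvergent.comp_fibre (hQ : Measurable Q)
    (hQv : ∀ a (t : ℝ), Q (a + t • v) = Q a + t) (hG0 : ∃ᵐ t, G t ≠ 0)
    (hG : LaplaceConvergent μ ℓ (fun a => G (Q a)))
    (hH : LaplaceConvergent volume (LinearMap.toSpanSingleton ℝ ℂ (ℓ v)) H) :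
    LaplaceConvergent μ ℓ (fun a => H (Q a)) := by
  obtain ⟨r, hGr, hr⟩ :=
    (hG0.and_eventually (integrable_prod_of_fibreSwap hQ hQv hG hH).prod_left_ae).exists
  have hunit : IsUnit (cexp (LinearMap.toSpanSingleton ℝ ℂ (ℓ v) r) * G r) :=
    (mul_ne_zero (Complex.exp_ne_zero _) hGr).isUnit
  exact (integrable_mul_const_iff hunit (fun a => cexp (ℓ a) * H (Q a))).1 hr

theorem laplaceTransform_comp_fibre_mul (hQ : Measurable Q)
    (hQv : ∀ a (t : ℝ), Q (a + t • v) = Q a + t)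
    (hG : LaplaceConvergent μ ℓ (fun a => G (Q a)))
    (hH : LaplaceConvergent volume (LinearMap.toSpanSingleton ℝ ℂ (ℓ v)) H) :
    laplaceTransform μ ℓ (fun a => H (Q a)) *
        laplaceTransform volume (LinearMap.toSpanSingleton ℝ ℂ (ℓ v)) G =
      laplaceTransform μ ℓ (fun a => G (Q a)) *
        laplaceTransform volume (LinearMap.toSpanSingleton ℝ ℂ (ℓ v)) H := by
  have hswap := measurePreserving_fibreSwap (μ := μ) hQ hQv
  have hintegral := integral_map hswap.aemeasurable
    (hswap.map_eq.symm ▸ (hG.mul_prod hH).aestronglyMeasurable)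
  rw [hswap.map_eq] at hintegral
  unfold laplaceTransform
  rw [← integral_prod_mul, ← integral_prod_mul, hintegral]
  simp only [cexp_mul_comp_fibreSwap hQv ℓ G H]

end Fibres

section ComplexExponential

variable {X : Type*} [MeasurableSpace X] {μ : Measure X}

theorem integrable_cexp_ofReal_mul_I_mul_iff {θ : X → ℝ} (hθ : Measurable θ) {F : X → ℂ} :
    Integrable (fun x => cexp (θ x * I) * F x) μ ↔ Integrable F μ := by
  have mul_phase {η : X → ℝ} (hη : Measurable η) {G : X → ℂ} (hG : Integrable G μ) :
      Integrable (fun x => cexp (η x * I) * G x) μ :=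
    hG.bdd_mul (c := 1) (by fun_prop) (.of_forall fun x => (norm_exp_ofReal_mul_I _).le)
  refine ⟨fun h => ?_, mul_phase hθ⟩
  convert mul_phase hθ.neg h using 2 with x
  rw [← mul_assoc, ← Complex.exp_add]
  simp

theorem integrable_cexp_mul_ofReal_iff {w : X → ℂ} (hw : Measurable w) {g : X → ℝ} :
    Integrable (fun x => cexp (w x) * g x) μ ↔
      Integrable (fun x => Real.exp (w x).re * g x) μ := by
  have polar (x : X) : cexp (w x) * g x =
      cexp ((w x).im * I) * ((Real.exp (w x).re * g x : ℝ) : ℂ) := by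
    conv_lhs => rw [← re_add_im (w x), Complex.exp_add]
    push_cast
    ring
  simp only [polar]
  rw [integrable_cexp_ofReal_mul_I_mul_iff (by fun_prop)]
  exact ⟨fun h => h.re, fun h => h.ofReal⟩

end ComplexExponential

section LogarithmicCoordinates

theorem ofReal_exp_cpow (t : ℝ) (w : ℂ) : (Real.exp t : ℂ) ^ w = cexp (t * w) := by
  rw [cpow_def_of_ne_zero (by exact_mod_cast (Real.exp_pos t).ne'),
    ← ofReal_log (Real.exp_pos t).le, Real.log_exp]

theorem integral_Ioi_zero_eq_integral_exp {F : Type*} [NormedAddCommGroup F] [NormedSpace ℝ F]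
    (g : ℝ → F) : ∫ x in Ioi 0, g x = ∫ t, Real.exp t • g (Real.exp t) := by
  rw [← Real.range_exp, ← image_univ, integral_image_eq_integral_abs_deriv_smul
    MeasurableSet.univ (fun t _ => (Real.hasDerivAt_exp t).hasDerivWithinAt)
    Real.exp_injective.injOn]
  simp

theorem integrableOn_Ioi_zero_iff_integrable_exp {F : Type*} [NormedAddCommGroup F]
    [NormedSpace ℝ F] {g : ℝ → F} :
    IntegrableOn g (Ioi 0) ↔ Integrable (fun t => Real.exp t • g (Real.exp t)) := by
  rw [← Real.range_exp, ← image_univ, integrableOn_image_iff_integrableOn_abs_deriv_smul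
    MeasurableSet.univ (fun t _ => (Real.hasDerivAt_exp t).hasDerivWithinAt)
    Real.exp_injective.injOn]
  simp

theorem mellin_eq_laplaceTransform (g : ℝ → ℂ) (s : ℂ) :
    mellin g s =
      laplaceTransform volume (LinearMap.toSpanSingleton ℝ ℂ s) (fun t => g (Real.exp t)) := by
  rw [mellin, integral_Ioi_zero_eq_integral_exp, laplaceTransform]
  refine integral_congr_ae (.of_forall fun t => ?_)
  simp only [ofReal_exp_cpow, LinearMap.toSpanSingleton_apply, real_smul, smul_eq_mul]
  rw [ofReal_exp, ← mul_assoc, ← Complex.exp_add]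
  ring_nf

theorem MemL1w1.laplaceConvergent {h : ℝ → ℝ} {s : ℂ} (hh : MemL1w1 s.re h) :
    LaplaceConvergent volume (LinearMap.toSpanSingleton ℝ ℂ s) (fun t => (h (Real.exp t) : ℂ)) := by
  refine (integrable_cexp_mul_ofReal_iff
    (LinearMap.continuous_of_finiteDimensional _).measurable).2 ?_
  refine (integrableOn_Ioi_zero_iff_integrable_exp.1 hh).congr (.of_forall fun t => ?_)
  simp only [LinearMap.toSpanSingleton_apply, real_smul, re_ofReal_mul, smul_eq_mul,
    ← Real.exp_mul]
  rw [mul_left_comm, ← Real.exp_add, mul_comm]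
  ring_nf

/-- The coordinatewise exponential, the logarithmic parametrisation of the positive orthant. -/
def expVec {ι : Type*} (a : ι → ℝ) (i : ι) : ℝ := Real.exp (a i)

theorem expVec_add {ι : Type*} (a b : ι → ℝ) : expVec (a + b) = expVec a * expVec b :=
  funext fun i => Real.exp_add (a i) (b i)

theorem expVec_injective {ι : Type*} : Function.Injective (expVec (ι := ι)) :=
  fun _ _ hab => funext fun i => Real.exp_injective (congrFun hab i)

theorem measurable_expVec {ι : Type*} : Measurable (expVec (ι := ι)) := by
  unfold expVec
  fun_prop

theorem hasFDerivAt_expVec {ι : Type*} [Finite ι] (a : ι → ℝ) :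
    HasFDerivAt expVec (ContinuousLinearMap.pi fun i =>
      (Real.exp (a i) • ContinuousLinearMap.id ℝ ℝ) ∘SL ContinuousLinearMap.proj i) a := by
  have := Fintype.ofFinite ι
  refine hasFDerivAt_pi.2 fun i => ?_
  exact (ContinuousLinearMap.proj (R := ℝ) (φ := fun _ : ι => ℝ) i).hasFDerivAt.exp.congr_fderiv
    (by ext; simp)

theorem abs_det_fderiv_expVec {ι : Type*} [Fintype ι] (a : ι → ℝ) :
    |(ContinuousLinearMap.pi fun i => (Real.exp (a i) • ContinuousLinearMap.id ℝ ℝ) ∘SL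
        ContinuousLinearMap.proj (R := ℝ) (φ := fun _ : ι => ℝ) i).det| =
      Real.exp (∑ i, a i) := by
  rw [ContinuousLinearMap.det_pi, Real.exp_sum, Finset.abs_prod]
  simp [ContinuousLinearMap.det]

/-- The linear form `a ↦ ∑ i, aᵢ zᵢ`; the Mellin kernel `x ^ z` is its exponential
at `a = log x`. -/
def pairing {ι : Type*} [Fintype ι] (z : ι → ℂ) : (ι → ℝ) →ₗ[ℝ] ℂ :=
  Fintype.linearCombination ℝ z

section Pairing

variable {ι : Type*} [Fintype ι] (z : ι → ℂ) (a : ι → ℝ)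

theorem pairing_apply : pairing z a = ∑ i, a i * z i := by
  simp [pairing, Fintype.linearCombination_apply]

theorem re_pairing : (pairing z a).re = ∑ i, a i * (z i).re := by
  simp [pairing_apply]

theorem pairing_one_right : pairing z 1 = ∑ i, z i := by
  simp [pairing_apply]

theorem ofReal_sum_add_pairing_sub_one :
    ((∑ i, a i : ℝ) : ℂ) + pairing (fun i => z i - 1) a = pairing z a := by
  simp only [pairing_apply, mul_sub, mul_one, Finset.sum_sub_distrib, ofReal_sum]
  ring

theorem ofReal_sum_sub_pairing :
    ((∑ i, a i : ℝ) : ℂ) - pairing z a = pairing (fun i => 1 - z i) a := by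
  simp only [pairing_apply, mul_sub, mul_one, Finset.sum_sub_distrib, ofReal_sum]

theorem prod_expVec_cpow : ∏ i, (expVec a i : ℂ) ^ z i = cexp (pairing z a) := by
  simp only [expVec, ofReal_exp_cpow, pairing_apply, Complex.exp_sum]

end Pairing

variable {n : ℕ}

theorem expVec_mem_posOrth (a : Fin n → ℝ) : expVec a ∈ posOrth n := fun i => Real.exp_pos (a i)

theorem range_expVec : range expVec = posOrth n := by
  refine (range_subset_iff.2 expVec_mem_posOrth).antisymm fun x hx => ?_
  exact ⟨fun i => Real.log (x i), funext fun i => Real.exp_log (hx i)⟩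

theorem integral_posOrth_eq_integral_expVec {F : Type*} [NormedAddCommGroup F] [NormedSpace ℝ F]
    (g : (Fin n → ℝ) → F) :
    ∫ x in posOrth n, g x = ∫ a : Fin n → ℝ, Real.exp (∑ i, a i) • g (expVec a) := by
  rw [← range_expVec, ← image_univ, integral_image_eq_integral_abs_det_fderiv_smul volume
    MeasurableSet.univ (fun a _ => (hasFDerivAt_expVec a).hasFDerivWithinAt)
    expVec_injective.injOn]
  simp only [abs_det_fderiv_expVec, Measure.restrict_univ]

theorem integrableOn_posOrth_iff_integrable_expVec {F : Type*} [NormedAddCommGroup F]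
    [NormedSpace ℝ F] {g : (Fin n → ℝ) → F} :
    IntegrableOn g (posOrth n) ↔
      Integrable (fun a : Fin n → ℝ => Real.exp (∑ i, a i) • g (expVec a)) := by
  rw [← range_expVec, ← image_univ, integrableOn_image_iff_integrableOn_abs_det_fderiv_smul volume
    MeasurableSet.univ (fun a _ => (hasFDerivAt_expVec a).hasFDerivWithinAt)
    expVec_injective.injOn]
  simp only [abs_det_fderiv_expVec, integrableOn_univ]

theorem mellinT_eq_laplaceTransform (g : (Fin n → ℝ) → ℝ) (z : Fin n → ℂ) :
    mellinT n g z = laplaceTransform volume (pairing z) (fun a => (g (expVec a) : ℂ)) := by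
  rw [mellinT, integral_posOrth_eq_integral_expVec, laplaceTransform]
  refine integral_congr_ae (.of_forall fun a => ?_)
  simp only [prod_expVec_cpow]
  rw [real_smul, ofReal_exp, ← mul_assoc, ← Complex.exp_add, ofReal_sum_add_pairing_sub_one]

theorem memL1w_re_iff_laplaceConvergent {g : (Fin n → ℝ) → ℝ} {z : Fin n → ℂ} :
    MemL1w n (fun i => (z i).re) g ↔
      LaplaceConvergent volume (pairing z) (fun a => (g (expVec a) : ℂ)) := by
  rw [MemL1w, integrableOn_posOrth_iff_integrable_expVec, LaplaceConvergent,
    integrable_cexp_mul_ofReal_iff (LinearMap.continuous_of_finiteDimensional _).measurable]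
  refine integrable_congr (.of_forall fun a => ?_)
  simp only [expVec, re_pairing, smul_eq_mul, ← Real.exp_mul, ← Real.exp_sum]
  rw [mul_left_comm, ← Real.exp_add, mul_comm, ← Finset.sum_add_distrib]
  ring_nf

end LogarithmicCoordinates

section MellinConvolution

variable {n : ℕ} {q : (Fin n → ℝ) → ℝ} {h : ℝ → ℝ} {f : (Fin n → ℝ) → ℝ} {z : Fin n → ℂ}

theorem cexp_neg_pairing_mul_exp_sum (a : Fin n → ℝ) (y : ℝ) :
    cexp ((-pairing z) a) * ((Real.exp (∑ i, a i) * y : ℝ) : ℂ) =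
      cexp (pairing (fun i => 1 - z i) a) * y := by
  rw [ofReal_mul, ofReal_exp, ← mul_assoc, ← Complex.exp_add, LinearMap.neg_apply,
    neg_add_eq_sub, ofReal_sum_sub_pairing]

theorem Rhq_expVec (b : Fin n → ℝ) :
    Rhq n q h f (expVec b) =
      ∫ a, (Real.exp (∑ i, a i) * f (expVec a)) * h (q (expVec (b + a))) := by
  rw [Rhq, integral_posOrth_eq_integral_expVec]
  refine integral_congr_ae (.of_forall fun a => ?_)
  simp only [expVec_add, smul_eq_mul]
  exact mul_left_comm _ _ _ |>.trans (mul_comm _ _)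

theorem mellinT_one_sub_eq_laplaceTransform :
    mellinT n f (fun i => 1 - z i) = laplaceTransform volume (-pairing z)
      (fun a => ((Real.exp (∑ i, a i) * f (expVec a) : ℝ) : ℂ)) := by
  simp only [mellinT_eq_laplaceTransform, laplaceTransform, cexp_neg_pairing_mul_exp_sum]

theorem memL1w_one_sub_re_iff_laplaceConvergent :
    MemL1w n (fun i => 1 - (z i).re) f ↔ LaplaceConvergent volume (-pairing z)
      (fun a => ((Real.exp (∑ i, a i) * f (expVec a) : ℝ) : ℂ)) := by
  simpa only [LaplaceConvergent, cexp_neg_pairing_mul_exp_sum, sub_re, one_re] using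
    memL1w_re_iff_laplaceConvergent (g := f) (z := fun i => 1 - z i)

theorem mellinT_Rhq_eq_mul (hf : MemL1w n (fun i => 1 - (z i).re) f)
    (hhq : MemL1w n (fun i => (z i).re) (fun x => h (q x))) :
    mellinT n (Rhq n q h f) z =
      mellinT n f (fun i => 1 - z i) * mellinT n (fun x => h (q x)) z := by
  rw [mellinT_one_sub_eq_laplaceTransform, mellinT_eq_laplaceTransform (fun x => h (q x)),
    ← laplaceTransform_correlation (memL1w_one_sub_re_iff_laplaceConvergent.1 hf)
      (memL1w_re_iff_laplaceConvergent.1 hhq), mellinT_eq_laplaceTransform]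
  simp only [Rhq_expVec, ← integral_complex_ofReal, ofReal_mul]

end MellinConvolution

/-- A measurable cost function: the variant of `IsCostFun` with measurability in place of `C¹`.
By homogeneity, bounding the unit level set bounds all of them. -/
structure IsMeasurableCost (n : ℕ) (q : (Fin n → ℝ) → ℝ) : Prop where
  measurable_domRestrict : Measurable ((posOrth n).domRestrict q)
  pos : ∀ x ∈ posOrth n, 0 < q x
  map_smul : ∀ r : ℝ, 0 < r → ∀ x ∈ posOrth n, q (r • x) = r * q x
  isBounded_levelSet_one : Bornology.IsBounded {x | x ∈ posOrth n ∧ q x = 1}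

theorem IsCostFun.isMeasurableCost {n : ℕ} {q : (Fin n → ℝ) → ℝ} (hq : IsCostFun n q) :
    IsMeasurableCost n q where
  measurable_domRestrict := (continuousOn_iff_continuous_domRestrict.1 hq.1.continuousOn).measurable
  pos := hq.2.1
  map_smul := hq.2.2.1
  isBounded_levelSet_one := hq.2.2.2 1

theorem posOrth_eq_pi (n : ℕ) : posOrth n = univ.pi fun _ => Ioi 0 := by
  ext
  simp [posOrth]

theorem measurableSet_posOrth (n : ℕ) : MeasurableSet (posOrth n) := by
  rw [posOrth_eq_pi]
  exact .univ_pi fun _ => measurableSet_Ioi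

theorem memL1w_exp_neg_mul_sum {n : ℕ} {c : Fin n → ℝ} (hc : ∀ i, 0 < c i) {δ : ℝ} (hδ : 0 < δ) :
    MemL1w n c (fun x => Real.exp (-(δ * ∑ i, x i))) := by
  have hprod := Integrable.fintype_prod (μ := fun _ : Fin n => volume.restrict (Ioi (0 : ℝ)))
    fun i => integrableOn_rpow_mul_exp_neg_mul_rpow (p := 1) (s := c i - 1) (b := δ)
      (by linarith [hc i]) one_pos hδ
  rw [← Measure.restrict_pi_pi, ← posOrth_eq_pi] at hprod
  refine hprod.congr (.of_forall fun x => ?_)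
  simp only [Real.rpow_one, Finset.prod_mul_distrib, ← Real.exp_sum, neg_mul,
    Finset.sum_neg_distrib, ← Finset.mul_sum]
  ring

/-- The logarithm of `q` in logarithmic coordinates. -/
def logCost {ι : Type*} (q : (ι → ℝ) → ℝ) (a : ι → ℝ) : ℝ := Real.log (q (expVec a))

namespace IsMeasurableCost

variable {n : ℕ} {q : (Fin n → ℝ) → ℝ}

theorem exists_sum_le_mul (hq : IsMeasurableCost n q) :
    ∃ C > 0, ∀ x ∈ posOrth n, ∑ i, x i ≤ C * q x := by
  obtain ⟨C, hC, hbound⟩ := hq.isBounded_levelSet_one.exists_pos_norm_le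
  refine ⟨(n + 1) * C, by positivity, fun x hx => ?_⟩
  have hqx := hq.pos x hx
  have hunit : (q x)⁻¹ • x ∈ {x | x ∈ posOrth n ∧ q x = 1} :=
    ⟨fun i => mul_pos (inv_pos.2 hqx) (hx i), by
      rw [hq.map_smul _ (inv_pos.2 hqx) x hx, inv_mul_cancel₀ hqx.ne']⟩
  have hcoord (i : Fin n) : x i ≤ C * q x := by
    have := (Real.le_norm_self _).trans ((norm_le_pi_norm _ i).trans (hbound _ hunit))
    rwa [Pi.smul_apply, smul_eq_mul, inv_mul_le_iff₀ hqx, mul_comm] at this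
  calc ∑ i, x i ≤ ∑ _i : Fin n, C * q x := Finset.sum_le_sum fun i _ => hcoord i
    _ = n * (C * q x) := by simp
    _ ≤ (n + 1) * C * q x := by nlinarith [mul_pos hC hqx]

theorem memL1w_exp_neg (hq : IsMeasurableCost n q) {c : Fin n → ℝ} (hc : ∀ i, 0 < c i) :
    MemL1w n c (fun x => Real.exp (-q x)) := by
  obtain ⟨C, hC, hsum⟩ := hq.exists_sum_le_mul
  have hq_meas : AEMeasurable q (volume.restrict (posOrth n)) :=
    aemeasurable_restrict_of_measurable_subtype (measurableSet_posOrth n) hq.measurable_domRestrict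
  refine (memL1w_exp_neg_mul_sum hc (inv_pos.2 hC)).mono'
    (hq_meas.neg.exp.mul (Measurable.aemeasurable (by fun_prop))).aestronglyMeasurable ?_
  filter_upwards [ae_restrict_mem (measurableSet_posOrth n)] with x hx
  have hx_prod : 0 ≤ ∏ i, x i ^ (c i - 1) :=
    Finset.prod_nonneg fun i _ => Real.rpow_nonneg (hx i).le _
  rw [Real.norm_of_nonneg (mul_nonneg (Real.exp_pos _).le hx_prod)]
  gcongr
  exact (inv_mul_le_iff₀ hC).2 (hsum x hx)

theorem exp_logCost (hq : IsMeasurableCost n q) (a : Fin n → ℝ) :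
    Real.exp (logCost q a) = q (expVec a) :=
  Real.exp_log (hq.pos _ (expVec_mem_posOrth a))

theorem measurable_logCost (hq : IsMeasurableCost n q) : Measurable (logCost q) :=
  (hq.measurable_domRestrict.comp (measurable_expVec.subtype_mk (h := expVec_mem_posOrth))).log

theorem logCost_add_smul_one (hq : IsMeasurableCost n q) (a : Fin n → ℝ) (t : ℝ) :
    logCost q (a + t • 1) = logCost q a + t := by
  have hscale : expVec (a + t • 1) = Real.exp t • expVec a := by
    ext i
    simp [expVec, Real.exp_add, mul_comm]
  have ha := expVec_mem_posOrth a
  rw [logCost, logCost, hscale, hq.map_smul _ (Real.exp_pos t) _ ha,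
    Real.log_mul (Real.exp_pos t).ne' (hq.pos _ ha).ne', Real.log_exp, add_comm]

theorem nonempty_fin (hq : IsMeasurableCost n q) : Nonempty (Fin n) := by
  by_contra hempty
  rw [not_nonempty_iff] at hempty
  have := hq.logCost_add_smul_one 0 1
  rw [Subsingleton.elim (0 + (1 : ℝ) • 1 : Fin n → ℝ) 0] at this
  linarith

theorem re_sum_pos (hq : IsMeasurableCost n q) {z : Fin n → ℂ} (hz : ∀ i, 0 < (z i).re) :
    0 < (∑ i, z i).re := by
  have := hq.nonempty_fin
  rw [re_sum]
  exact Finset.sum_pos (fun i _ => hz i) Finset.univ_nonempty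

section Composition

variable {h : ℝ → ℝ} {z : Fin n → ℂ}

theorem laplaceConvergent_exp_neg_exp_logCost (hq : IsMeasurableCost n q)
    (hz : ∀ i, 0 < (z i).re) :
    LaplaceConvergent volume (pairing z)
      (fun a => (Real.exp (-Real.exp (logCost q a)) : ℂ)) := by
  simpa only [hq.exp_logCost] using memL1w_re_iff_laplaceConvergent.1 (hq.memL1w_exp_neg hz)

theorem memL1w_comp (hq : IsMeasurableCost n q) (hz : ∀ i, 0 < (z i).re)
    (hh : MemL1w1 (∑ i, z i).re h) : MemL1w n (fun i => (z i).re) (fun x => h (q x)) := by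
  rw [← pairing_one_right] at hh
  have hconv := LaplaceConvergent.comp_fibre
    (G := fun t => (Real.exp (-Real.exp t) : ℂ)) hq.measurable_logCost hq.logCost_add_smul_one
    (.of_forall fun t => ofReal_ne_zero.2 (Real.exp_pos (-Real.exp t)).ne')
    (hq.laplaceConvergent_exp_neg_exp_logCost hz) hh.laplaceConvergent
  simp only [hq.exp_logCost] at hconv
  exact memL1w_re_iff_laplaceConvergent.2 hconv

theorem mellinT_comp_mul_Gamma (hq : IsMeasurableCost n q) (hz : ∀ i, 0 < (z i).re)
    (hh : MemL1w1 (∑ i, z i).re h) :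
    mellinT n (fun x => h (q x)) z * Complex.Gamma (∑ i, z i) =
      mellinT n (fun x => Real.exp (-q x)) z * mellin (fun t => (h t : ℂ)) (∑ i, z i) := by
  rw [Complex.Gamma_eq_integral (hq.re_sum_pos hz), Complex.GammaIntegral_eq_mellin]
  simp only [mellinT_eq_laplaceTransform, mellin_eq_laplaceTransform]
  rw [← pairing_one_right] at hh ⊢
  simpa only [hq.exp_logCost] using laplaceTransform_comp_fibre_mul
    (G := fun t => (Real.exp (-Real.exp t) : ℂ)) hq.measurable_logCost
    hq.logCost_add_smul_one (hq.laplaceConvergent_exp_neg_exp_logCost hz) hh.laplaceConvergent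

end Composition

end IsMeasurableCost

theorem mellin_Rhq_eq_general {n : ℕ} {q : (Fin n → ℝ) → ℝ} (hq : IsMeasurableCost n q)
    {z : Fin n → ℂ} (hz : ∀ i, 0 < (z i).re) {h : ℝ → ℝ} (hh : MemL1w1 (∑ i, z i).re h)
    {f : (Fin n → ℝ) → ℝ} (hf : MemL1w n (fun i => 1 - (z i).re) f) :
    mellinT n (Rhq n q h f) z =
      (Complex.Gamma (∑ i, z i))⁻¹ * mellinT n f (fun i => 1 - z i) *
        mellinT n (fun x => Real.exp (-q x)) z *
        mellin (fun t => (h t : ℂ)) (∑ i, z i) := by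
  have hΓ := Complex.Gamma_ne_zero_of_re_pos (hq.re_sum_pos hz)
  rw [mellinT_Rhq_eq_mul hf (hq.memL1w_comp hz hh), mul_assoc, ← hq.mellinT_comp_mul_Gamma hz hh]
  field_simp

/-- Projection formula: for `f ∈ L¹_{I-c}(ℝ^n_+) ∩ C(ℝ^n_+)`, `h ∈ L¹_α(ℝ¹_+)` and
every `z` with `Re z = c`, writing `s = z₁ + ⋯ + zₙ`,
`(M R^h_q f)(z) = Γ(s)⁻¹ (Mf)(I-z) (M e^{-q})(z) (Mh)(s)`. -/
theorem mellin_Rhq_eq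
    (n : ℕ) (hn : 2 ≤ n) (q : (Fin n → ℝ) → ℝ) (hq : IsCostFun n q)
    (c : Fin n → ℝ) (hc : ∀ i, 0 < c i) (α : ℝ) (hα : α = ∑ i, c i)
    (h : ℝ → ℝ) (hh : MemL1w1 α h)
    (f : (Fin n → ℝ) → ℝ) (hf : MemL1w n (fun i => 1 - c i) f)
    (hfc : ContinuousOn f (posOrth n)) :
    ∀ z : Fin n → ℂ, (∀ i, (z i).re = c i) →
      mellinT n (Rhq n q h f) z =
        (Complex.Gamma (∑ i, z i))⁻¹ * mellinT n f (fun i => 1 - z i) *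
          mellinT n (fun x => Real.exp (-q x)) z *
          mellin (fun t => (h t : ℂ)) (∑ i, z i) := by
  intro z hz
  obtain rfl : (fun i => (z i).re) = c := funext hz
  exact mellin_Rhq_eq_general hq.isMeasurableCost hc (re_sum _ z ▸ hα ▸ hh) hf
end
end
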